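/- arXiv:0805.2830 — 3 statements merged into one kernel-verified Lean document; each statement's English description precedes it below -/
import Mathlib

section
/- Assume A has complex eigenvalues λ_1, …, λ_d, …, λ_k, all nonzero, such that for every i there is a positive integer l_i with λ_i^{l_i} a positive integer, with |λ_1| = 1 and |λ_i| > 1 for all i = 2, …, d (where λ_1, …, λ_d are the roots of the minimal polynomial of A and d is its degree), and assume the support of μ is not parallel to a proper subspace of ℚ^k invariant under A. Then there exist constants α > 0, c > 0 and N ∈ ℕ such that for every integer p > N with gcd(det(A), p) = 1 and gcd(det(B), p) = 1, and every n ≥ c·p², one has ‖P_n − U‖ ≤ 2^{k−1}·exp(−α·n/p²). -/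
open scoped BigOperators
open Matrix

noncomputable section

/-- Distribution of the un-reduced chain `X₀ = 0`, `X_{n+1} = A·X_n + B_n` on `ℤ^k`,
where the `B_n` are i.i.d. with common distribution `μ`. -/
def chainDist {k : ℕ} (A : Matrix (Fin k) (Fin k) ℤ) (μ : (Fin k → ℤ) → ℝ) :
    ℕ → (Fin k → ℤ) → ℝ
  | 0 => fun x => if x = 0 then 1 else 0
  | n + 1 => fun x => ∑' y : Fin k → ℤ, chainDist A μ n y * μ (x - A.mulVec y)

/-- `P_n`, the distribution of `X_n = A·X_{n-1} + B_{n-1} (mod p)` on `(ℤ/pℤ)^k`. -/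
def chainDistMod {k : ℕ} (A : Matrix (Fin k) (Fin k) ℤ) (μ : (Fin k → ℤ) → ℝ) (p : ℕ)
    (n : ℕ) (x : Fin k → ZMod p) : ℝ :=
  ∑' y : {y : Fin k → ℤ // (fun i => ((y i : ZMod p))) = x}, chainDist A μ n y.val

/-- The uniform distribution `U` on `(ℤ/pℤ)^k`. -/
def unif (k p : ℕ) : ℝ := ((p : ℝ) ^ k)⁻¹

/-- The variation distance `‖P_n − U‖`. -/
def tvDist {k : ℕ} (A : Matrix (Fin k) (Fin k) ℤ) (μ : (Fin k → ℤ) → ℝ) (p : ℕ)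
    (n : ℕ) : ℝ :=
  (1 / 2) * ∑' x : Fin k → ZMod p, |chainDistMod A μ p n x - unif k p|

/-- `supp μ` is parallel to `v + W` for some proper subspace `W` of `ℚ^k` invariant under
`A`. -/
def ParallelInv {k : ℕ} (A : Matrix (Fin k) (Fin k) ℤ) (μ : (Fin k → ℤ) → ℝ) : Prop :=
  ∃ (W : Submodule ℚ (Fin k → ℚ)) (v : Fin k → ℚ), W ≠ ⊤ ∧
    (∀ w ∈ W, (A.map (Int.cast : ℤ → ℚ)).mulVec w ∈ W) ∧
    ∀ x : Fin k → ℤ, μ x ≠ 0 → (fun i => (x i : ℚ)) - v ∈ W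

/-- `V = {h − k : h, k ∈ supp μ}`. -/
def Vset {k : ℕ} (μ : (Fin k → ℤ) → ℝ) : Set (Fin k → ℤ) :=
  {x | ∃ h g : Fin k → ℤ, μ h ≠ 0 ∧ μ g ≠ 0 ∧ x = h - g}

/-- `d`, the degree of the minimal polynomial of `A` (over `ℚ`). -/
def minpolyDeg {k : ℕ} (A : Matrix (Fin k) (Fin k) ℤ) : ℕ :=
  (minpoly ℚ (A.map (Int.cast : ℤ → ℚ))).natDegree

/-- `V^{d−1} = {A^m x : x ∈ V, m = 0, …, d−1}`. -/
def VdSet {k : ℕ} (A : Matrix (Fin k) (Fin k) ℤ) (μ : (Fin k → ℤ) → ℝ) :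
    Set (Fin k → ℤ) :=
  {y | ∃ x ∈ Vset μ, ∃ m : ℕ, m < minpolyDeg A ∧ y = (A ^ m).mulVec x}

/-- The matrix `B = (y_1 … y_k)` with columns `y_1, …, y_k`. -/
def colMat {k : ℕ} (y : Fin k → (Fin k → ℤ)) : Matrix (Fin k) (Fin k) ℤ :=
  Matrix.of fun i j => y j i

/-- distance of `z / p` to the nearest integer -/
def dz (p : ℕ) (z : ZMod p) : ℝ := ((z.valMinAbs.natAbs : ℕ) : ℝ) / p

lemma dz_nonneg (p : ℕ) (z : ZMod p) : 0 ≤ dz p z := by unfold dz; positivity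

lemma dz_neg (p : ℕ) (z : ZMod p) : dz p (-z) = dz p z := by
  unfold dz; rw [ZMod.natAbs_valMinAbs_neg]

lemma dz_add_le (p : ℕ) (x z : ZMod p) : dz p (x + z) ≤ dz p x + dz p z := by
  unfold dz
  rw [← add_div]
  gcongr
  have h1 := ZMod.natAbs_valMinAbs_add_le x z
  have h2 := Int.natAbs_add_le x.valMinAbs z.valMinAbs
  exact_mod_cast h1.trans h2

lemma dz_zero (p : ℕ) : dz p 0 = 0 := by simp [dz]

lemma dz_mul_le (p : ℕ) (m : ℕ) (x : ZMod p) : dz p ((m : ZMod p) * x) ≤ m * dz p x := by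
  induction m with
  | zero => simp [dz_zero]
  | succ m ih =>
    have := dz_add_le p ((m : ZMod p) * x) x
    push_cast
    rw [add_mul, one_mul, add_mul, one_mul]
    linarith

lemma valMinAbs_scale (p : ℕ) [NeZero p] (m : ℕ) (x : ZMod p)
    (h : 2 * m * x.valMinAbs.natAbs < p) :
    ((m : ZMod p) * x).valMinAbs.natAbs = m * x.valMinAbs.natAbs := by
  have : ((m : ZMod p) * x).valMinAbs = m * x.valMinAbs := by
    rw [ZMod.valMinAbs_spec]
    constructor
    · push_cast [ZMod.coe_valMinAbs]; rfl
    · have h' : |(m * x.valMinAbs * 2 : ℤ)| < p := by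
        rw [abs_mul, abs_mul]
        simp only [Nat.abs_cast, Nat.abs_ofNat]
        zify at h
        linarith
      rw [abs_lt] at h'
      exact ⟨h'.1, h'.2.le⟩
  rw [this, Int.natAbs_mul, Int.natAbs_natCast]

lemma dz_escape (p : ℕ) [NeZero p] (m : ℕ) (hm : 2 ≤ m) (z : ZMod p) (hz : z ≠ 0) :
    ∃ s ≤ p, 1 / (2 * (m : ℝ)) ≤ dz p ((m : ZMod p) ^ s * z) := by
  by_contra! hcon
  have hp : (0 : ℝ) < p := by exact_mod_cast Nat.pos_of_ne_zero (NeZero.ne p)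
  have hlt : ∀ s ≤ p, 2 * m * ((m : ZMod p) ^ s * z).valMinAbs.natAbs < p := by
    intro s hs
    have := hcon s hs
    unfold dz at this
    have hm0 : (0 : ℝ) < 2 * m := by positivity
    rw [div_lt_div_iff₀ hp hm0] at this
    have h3 : ((2 * m * ((m : ZMod p) ^ s * z).valMinAbs.natAbs : ℕ) : ℝ) < (p : ℝ) := by
      push_cast at this ⊢; linarith
    exact_mod_cast h3
  have hge : ∀ s ≤ p, 2 ^ s ≤ ((m : ZMod p) ^ s * z).valMinAbs.natAbs := by
    intro s
    induction s with
    | zero =>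
      intro _
      have : z.valMinAbs ≠ 0 := fun h => hz ((ZMod.valMinAbs_eq_zero z).1 h)
      simp only [pow_zero, one_mul]
      omega
    | succ s ih =>
      intro hs
      have h1 := ih (by omega)
      have h2 := valMinAbs_scale p m _ (hlt s (by omega))
      rw [pow_succ' (m : ZMod p), mul_assoc, h2, pow_succ']
      exact Nat.mul_le_mul hm h1
  have h1 := hge p le_rfl
  have h2 := hlt p le_rfl
  have h3 : p < 2 ^ p := Nat.lt_two_pow_self
  nlinarith

lemma re_char_le (p : ℕ) [NeZero p] (z : ZMod p) :
    (ZMod.stdAddChar z : ℂ).re ≤ 1 - 8 * dz p z ^ 2 := by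
  have hp : (0 : ℝ) < p := by exact_mod_cast Nat.pos_of_ne_zero (NeZero.ne p)
  have h0 : (ZMod.stdAddChar z : ℂ).re = Real.cos (2 * Real.pi * z.valMinAbs / p) := by
    conv_lhs => rw [← ZMod.coe_valMinAbs z]
    rw [ZMod.stdAddChar_coe]
    rw [show (2 * (Real.pi : ℂ) * Complex.I * (z.valMinAbs : ℂ) / (p : ℂ)) =
      ((2 * Real.pi * z.valMinAbs / p : ℝ) : ℂ) * Complex.I by push_cast; ring]
    rw [Complex.exp_ofReal_mul_I_re]
  have hab : |(2 * Real.pi * z.valMinAbs / p : ℝ)| ≤ Real.pi := by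
    have h1 := ZMod.valMinAbs_mem_Ioc z
    have h2 : |((z.valMinAbs : ℝ)) * 2| ≤ p := by
      rw [abs_le]
      constructor
      · exact_mod_cast h1.1.le
      · exact_mod_cast h1.2
    rw [show (2 * Real.pi * z.valMinAbs / p : ℝ) = Real.pi * (z.valMinAbs * 2) / p by ring,
      abs_div, abs_mul, abs_of_pos Real.pi_pos, abs_of_pos hp, div_le_iff₀ hp]
    exact mul_le_mul_of_nonneg_left h2 Real.pi_pos.le
  rw [h0]
  refine (Real.cos_le_one_sub_mul_cos_sq hab).trans ?_
  have : dz p z ^ 2 = (z.valMinAbs : ℝ) ^ 2 / p ^ 2 := by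
    unfold dz
    rw [div_pow]
    congr 1
    rw [Nat.cast_natAbs, Int.cast_abs, sq_abs]
  rw [this]
  have hpi := Real.pi_pos
  apply le_of_eq
  field_simp
  ring

lemma two_point (r s : ℝ) (hr : 0 ≤ r) (hs : 0 ≤ s) (hrs : r + s ≤ 1) (u v : ℂ)
    (hu : ‖u‖ = 1) (hv : ‖v‖ = 1) (t : ℝ) (ht : 0 ≤ t)
    (h : (u * starRingEnd ℂ v).re ≤ 1 - t) :
    ‖(r : ℂ) * u + s * v‖ ≤ r + s - r * s * t := by
  have ht2 : t ≤ 2 := by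
    have := Complex.abs_re_le_norm (u * starRingEnd ℂ v)
    rw [norm_mul, RCLike.norm_conj, hu, hv] at this
    have := (abs_le.1 this).1
    linarith
  have hpos : 0 ≤ r + s - r * s * t := by nlinarith [mul_nonneg hr hs]
  have hsq : ‖(r : ℂ) * u + s * v‖ ^ 2 = r ^ 2 + s ^ 2 + 2 * (r * s) * (u * starRingEnd ℂ v).re := by
    have hu' : u.re ^ 2 + u.im ^ 2 = 1 := by
      have := Complex.sq_norm u; rw [hu, Complex.normSq_apply] at this; nlinarith
    have hv' : v.re ^ 2 + v.im ^ 2 = 1 := by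
      have := Complex.sq_norm v; rw [hv, Complex.normSq_apply] at this; nlinarith
    rw [Complex.sq_norm, Complex.normSq_apply]
    simp
    linear_combination r ^ 2 * hu' + s ^ 2 * hv'
  apply le_of_sq_le_sq _ hpos
  rw [hsq]
  have h1 : 0 ≤ r * s := mul_nonneg hr hs
  have h2 : r * s * (u * starRingEnd ℂ v).re ≤ r * s * (1 - t) := mul_le_mul_of_nonneg_left h h1
  nlinarith [mul_nonneg (mul_nonneg h1 ht) (sub_nonneg.2 hrs), sq_nonneg (r * s * t)]

/-- reduction mod `p` of an integer vector -/
def castv {k : ℕ} (p : ℕ) (x : Fin k → ℤ) : Fin k → ZMod p := fun i => (x i : ZMod p)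

/-- the characteristic function of `μ` -/
def muHat {k : ℕ} (μ : (Fin k → ℤ) → ℝ) (p : ℕ) [NeZero p] (h : Fin k → ZMod p) : ℂ :=
  ∑' z : Fin k → ℤ, (μ z : ℂ) * ZMod.stdAddChar (h ⬝ᵥ castv p z)

lemma castv_sub {k : ℕ} (p : ℕ) (x z : Fin k → ℤ) : castv p (x - z) = castv p x - castv p z := by
  ext i; simp [castv]

lemma castv_add {k : ℕ} (p : ℕ) (x z : Fin k → ℤ) : castv p (x + z) = castv p x + castv p z := by
  ext i; simp [castv]

lemma castv_mulVec {k : ℕ} (p : ℕ) (A : Matrix (Fin k) (Fin k) ℤ) (z : Fin k → ℤ) :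
    castv p (A.mulVec z) = (A.map (Int.cast : ℤ → ZMod p)).mulVec (castv p z) := by
  ext i; simp [castv, Matrix.mulVec, dotProduct]

lemma muHat_bound {k : ℕ} (μ : (Fin k → ℤ) → ℝ) (hμ0 : ∀ x, 0 ≤ μ x) (hμ1 : HasSum μ 1)
    (p : ℕ) [NeZero p] (h : Fin k → ZMod p) (a b : Fin k → ℤ) :
    ‖muHat μ p h‖ ≤ Real.exp (-(8 * (μ a * μ b)) * dz p (h ⬝ᵥ castv p (a - b)) ^ 2) := by
  have hnorm : ∀ z, ‖(μ z : ℂ) * ZMod.stdAddChar (h ⬝ᵥ castv p z)‖ = μ z := by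
    intro z
    rw [norm_mul, AddChar.norm_apply, mul_one, Complex.norm_real, Real.norm_of_nonneg (hμ0 z)]
  have hsum : Summable fun z => (μ z : ℂ) * ZMod.stdAddChar (h ⬝ᵥ castv p z) := by
    apply Summable.of_norm
    simp_rw [hnorm]
    exact hμ1.summable
  have key : ‖muHat μ p h‖ ≤ 1 - 8 * (μ a * μ b) * dz p (h ⬝ᵥ castv p (a - b)) ^ 2 := by
    by_cases hab : a = b
    · subst hab
      have : dz p (h ⬝ᵥ castv p (a - a)) = 0 := by
        rw [castv_sub, sub_self, dotProduct_zero, dz_zero]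
      rw [this]
      have := norm_tsum_le_tsum_norm hsum.norm
      simp_rw [hnorm, hμ1.tsum_eq] at this
      simpa [muHat] using this
    · have h1 := hsum.sum_add_tsum_subtype_compl {a, b}
      rw [Finset.sum_pair hab] at h1
      have h2 := hμ1.summable.sum_add_tsum_subtype_compl {a, b}
      rw [Finset.sum_pair hab, hμ1.tsum_eq] at h2
      have h3 : ‖∑' x : {x // x ∉ ({a, b} : Finset (Fin k → ℤ))},
          (μ x : ℂ) * (ZMod.stdAddChar (h ⬝ᵥ castv p x.1) : ℂ)‖ ≤
          ∑' x : {x // x ∉ ({a, b} : Finset (Fin k → ℤ))}, μ x := by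
        have := norm_tsum_le_tsum_norm (f := fun x : {x // x ∉ ({a, b} : Finset (Fin k → ℤ))} =>
          (μ x : ℂ) * (ZMod.stdAddChar (h ⬝ᵥ castv p x.1) : ℂ)) (hsum.norm.subtype _)
        simp_rw [hnorm] at this
        exact this
      have hrest : 0 ≤ ∑' x : {x // x ∉ ({a, b} : Finset (Fin k → ℤ))}, μ x :=
        tsum_nonneg fun x => hμ0 _
      have h4 := two_point (μ a) (μ b) (hμ0 a) (hμ0 b) (by linarith)
        (ZMod.stdAddChar (h ⬝ᵥ castv p a)) (ZMod.stdAddChar (h ⬝ᵥ castv p b))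
        (AddChar.norm_apply _ _) (AddChar.norm_apply _ _)
        (8 * dz p (h ⬝ᵥ castv p (a - b)) ^ 2) (by positivity) (by
          rw [← AddChar.map_neg_eq_conj, ← AddChar.map_add_eq_mul, ← sub_eq_add_neg,
            ← dotProduct_sub, ← castv_sub]
          exact re_char_le p _)
      unfold muHat
      rw [← h1]
      refine (norm_add_le _ _).trans ?_
      linarith
  refine key.trans ?_
  have := Real.add_one_le_exp (-(8 * (μ a * μ b)) * dz p (h ⬝ᵥ castv p (a - b)) ^ 2)
  linarith

lemma chain_prod_hasSum {k : ℕ} (f μ : (Fin k → ℤ) → ℝ)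
    (hf0 : ∀ x, 0 ≤ f x) (hf1 : HasSum f 1) (hμ0 : ∀ x, 0 ≤ μ x) (hμ1 : HasSum μ 1) :
    HasSum (fun q : (Fin k → ℤ) × (Fin k → ℤ) => f q.1 * μ q.2) 1 := by
  have h1 := hf1.summable.mul_of_nonneg hμ1.summable hf0 hμ0
  simpa using hf1.mul hμ1 h1

/-- the change of variables `(x, y) ↦ (y, x - A y)` -/
def shiftEquiv {k : ℕ} (A : Matrix (Fin k) (Fin k) ℤ) :
    (Fin k → ℤ) × (Fin k → ℤ) ≃ (Fin k → ℤ) × (Fin k → ℤ) where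
  toFun q := (q.2, q.1 - A.mulVec q.2)
  invFun q := (q.2 + A.mulVec q.1, q.1)
  left_inv q := by simp
  right_inv q := by simp

lemma chain_nonneg_hasSum {k : ℕ} (A : Matrix (Fin k) (Fin k) ℤ) (μ : (Fin k → ℤ) → ℝ)
    (hμ0 : ∀ x, 0 ≤ μ x) (hμ1 : HasSum μ 1) (n : ℕ) :
    (∀ x, 0 ≤ chainDist A μ n x) ∧ HasSum (chainDist A μ n) 1 := by
  induction n with
  | zero =>
    constructor
    · intro x; simp only [chainDist]; split_ifs <;> norm_num
    · exact hasSum_ite_eq 0 1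
  | succ n ih =>
    constructor
    · intro x
      simp only [chainDist]
      exact tsum_nonneg fun y => mul_nonneg (ih.1 y) (hμ0 _)
    · have h1 := chain_prod_hasSum _ μ ih.1 ih.2 hμ0 hμ1
      have h2 := (shiftEquiv A).hasSum_iff.2 h1
      refine h2.prod_fiberwise (fun x => ?_)
      exact (h2.summable.prod_factor x).hasSum

/-- the characteristic function of `X_n` -/
def pHat {k : ℕ} (A : Matrix (Fin k) (Fin k) ℤ) (μ : (Fin k → ℤ) → ℝ) (p : ℕ) [NeZero p] (n : ℕ)
    (h : Fin k → ZMod p) : ℂ :=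
  ∑' z : Fin k → ℤ, (chainDist A μ n z : ℂ) * ZMod.stdAddChar (h ⬝ᵥ castv p z)

lemma pHat_succ {k : ℕ} (A : Matrix (Fin k) (Fin k) ℤ) (μ : (Fin k → ℤ) → ℝ)
    (hμ0 : ∀ x, 0 ≤ μ x) (hμ1 : HasSum μ 1) (p : ℕ) [NeZero p] (n : ℕ) (h : Fin k → ZMod p) :
    pHat A μ p (n + 1) h =
      pHat A μ p n (h ᵥ* A.map (Int.cast : ℤ → ZMod p)) * muHat μ p h := by
  obtain ⟨hc0, hc1⟩ := chain_nonneg_hasSum A μ hμ0 hμ1 n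
  have h1 := chain_prod_hasSum _ μ hc0 hc1 hμ0 hμ1
  let G : (Fin k → ℤ) × (Fin k → ℤ) → ℂ := fun q =>
    ((chainDist A μ n q.1 : ℂ) * ZMod.stdAddChar
      ((h ᵥ* A.map (Int.cast : ℤ → ZMod p)) ⬝ᵥ castv p q.1)) *
      ((μ q.2 : ℂ) * ZMod.stdAddChar (h ⬝ᵥ castv p q.2))
  have hG : Summable G := by
    apply Summable.of_norm
    refine h1.summable.congr (fun q => ?_)
    simp only [G, norm_mul, AddChar.norm_apply, mul_one, Complex.norm_real,
      Real.norm_of_nonneg (hc0 _), Real.norm_of_nonneg (hμ0 _)]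
  have hG2 := (shiftEquiv A).summable_iff.2 hG
  have e1 : ∑' q, G q = pHat A μ p n (h ᵥ* A.map (Int.cast : ℤ → ZMod p)) * muHat μ p h := by
    rw [hG.tsum_prod]
    simp only [G, pHat, muHat]
    simp_rw [tsum_mul_left]
    rw [tsum_mul_right]
  rw [← e1, ← (shiftEquiv A).tsum_eq G]
  have hG2' : Summable fun q => G (shiftEquiv A q) := hG2
  rw [hG2'.tsum_prod]
  unfold pHat
  refine tsum_congr (fun x => ?_)
  simp only [chainDist]
  rw [Complex.ofReal_tsum, ← tsum_mul_right]
  refine tsum_congr (fun y => ?_)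
  simp only [G, shiftEquiv, Equiv.coe_fn_mk]
  rw [castv_sub, castv_mulVec, dotProduct_sub, dotProduct_mulVec]
  rw [sub_eq_add_neg (h ⬝ᵥ castv p x), AddChar.map_add_eq_mul]
  have h0 : (ZMod.stdAddChar ((h ᵥ* A.map (Int.cast : ℤ → ZMod p)) ⬝ᵥ castv p y) : ℂ) *
      ZMod.stdAddChar (-((h ᵥ* A.map (Int.cast : ℤ → ZMod p)) ⬝ᵥ castv p y)) = 1 := by
    rw [← AddChar.map_add_eq_mul, add_neg_cancel, AddChar.map_zero_eq_one]
  push_cast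
  linear_combination -((chainDist A μ n y : ℂ) * (μ (x - A *ᵥ y) : ℂ) *
    ZMod.stdAddChar (h ⬝ᵥ castv p x)) * h0

lemma pHat_eq {k : ℕ} (A : Matrix (Fin k) (Fin k) ℤ) (μ : (Fin k → ℤ) → ℝ)
    (hμ0 : ∀ x, 0 ≤ μ x) (hμ1 : HasSum μ 1) (p : ℕ) [NeZero p] (n : ℕ) (h : Fin k → ZMod p) :
    pHat A μ p n h =
      ∏ t ∈ Finset.range n, muHat μ p (h ᵥ* (A.map (Int.cast : ℤ → ZMod p)) ^ t) := by
  induction n generalizing h with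
  | zero =>
    simp only [pHat, chainDist, Finset.range_zero, Finset.prod_empty]
    rw [tsum_eq_single 0]
    · have : castv p (0 : Fin k → ℤ) = 0 := by ext i; simp [castv]
      simp [this]
    · intro b hb; simp [hb]
  | succ n ih =>
    rw [pHat_succ A μ hμ0 hμ1, ih, Finset.prod_range_succ']
    simp only [pow_zero, vecMul_one, vecMul_vecMul, pow_succ']

lemma char_orth {k : ℕ} (p : ℕ) [NeZero p] (z : Fin k → ZMod p) :
    ∑ h : Fin k → ZMod p, (ZMod.stdAddChar (h ⬝ᵥ z) : ℂ) = if z = 0 then (p : ℂ) ^ k else 0 := by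
  have h1 : ∀ h : Fin k → ZMod p, (ZMod.stdAddChar (h ⬝ᵥ z) : ℂ) =
      ∏ i, (ZMod.stdAddChar (h i * z i) : ℂ) := by
    intro h
    rw [dotProduct]
    induction (Finset.univ : Finset (Fin k)) using Finset.induction_on with
    | empty => simp
    | insert i t hi ih => rw [Finset.sum_insert hi, Finset.prod_insert hi,
        AddChar.map_add_eq_mul, ih]
  simp_rw [h1]
  have h2 := Finset.prod_univ_sum (fun _ : Fin k => (Finset.univ : Finset (ZMod p)))
    (fun i x => (ZMod.stdAddChar (x * z i) : ℂ))
  rw [Fintype.piFinset_univ] at h2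
  rw [← h2]
  simp_rw [AddChar.sum_mulShift _ (ZMod.isPrimitive_stdAddChar p), ZMod.card]
  split_ifs with hz
  · simp [hz]
  · obtain ⟨i, hi⟩ : ∃ i, z i ≠ 0 := by
      by_contra! hcon
      exact hz (funext hcon)
    exact Finset.prod_eq_zero (Finset.mem_univ i) (by simp [hi])

lemma plancherel {k : ℕ} (p : ℕ) [NeZero p] (f : (Fin k → ZMod p) → ℝ) :
    ∑ h : Fin k → ZMod p, ‖∑ x, (f x : ℂ) * ZMod.stdAddChar (h ⬝ᵥ x)‖ ^ 2 =
      (p : ℝ) ^ k * ∑ x, f x ^ 2 := by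
  have h1 : ∀ h : Fin k → ZMod p, ((‖∑ x, (f x : ℂ) * ZMod.stdAddChar (h ⬝ᵥ x)‖ ^ 2 : ℝ) : ℂ) =
      ∑ x, ∑ y, (f x : ℂ) * f y * ZMod.stdAddChar (h ⬝ᵥ (x - y)) := by
    intro h
    push_cast
    rw [← Complex.mul_conj', map_sum, Finset.sum_mul_sum]
    refine Finset.sum_congr rfl fun x _ => Finset.sum_congr rfl fun y _ => ?_
    rw [map_mul, Complex.conj_ofReal, ← AddChar.map_neg_eq_conj, dotProduct_sub,
      sub_eq_add_neg, AddChar.map_add_eq_mul]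
    ring
  have h2 : ((∑ h : Fin k → ZMod p, ‖∑ x, (f x : ℂ) * ZMod.stdAddChar (h ⬝ᵥ x)‖ ^ 2 : ℝ) : ℂ) =
      (((p : ℝ) ^ k * ∑ x, f x ^ 2 : ℝ) : ℂ) := by
    rw [Complex.ofReal_sum]
    simp_rw [h1]
    rw [Finset.sum_comm]
    push_cast
    rw [Finset.mul_sum]
    refine Finset.sum_congr rfl fun x _ => ?_
    rw [Finset.sum_comm]
    simp_rw [← Finset.mul_sum, char_orth]
    rw [Finset.sum_eq_single x]
    · simp; ring
    · intro y _ hy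
      rw [if_neg (sub_ne_zero.2 hy.symm), mul_zero]
    · simp
  exact_mod_cast h2

lemma sum_fiber {k : ℕ} (A : Matrix (Fin k) (Fin k) ℤ) (μ : (Fin k → ℤ) → ℝ)
    (hμ0 : ∀ x, 0 ≤ μ x) (hμ1 : HasSum μ 1) (p : ℕ) [NeZero p] (n : ℕ) (h : Fin k → ZMod p) :
    ∑ x, (chainDistMod A μ p n x : ℂ) * ZMod.stdAddChar (h ⬝ᵥ x) = pHat A μ p n h := by
  obtain ⟨hc0, hc1⟩ := chain_nonneg_hasSum A μ hμ0 hμ1 n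
  have hs : Summable fun z => (chainDist A μ n z : ℂ) * ZMod.stdAddChar (h ⬝ᵥ castv p z) := by
    apply Summable.of_norm
    refine hc1.summable.congr (fun q => ?_)
    simp only [norm_mul, AddChar.norm_apply, mul_one, Complex.norm_real,
      Real.norm_of_nonneg (hc0 _)]
  have h1 := (hs.hasSum.tsum_fiberwise (castv p)).tsum_eq
  unfold pHat
  rw [← h1, tsum_fintype]
  refine Finset.sum_congr rfl fun x _ => ?_
  unfold chainDistMod
  rw [Complex.ofReal_tsum, ← tsum_mul_right]
  refine tsum_congr (fun y => ?_)
  have : castv p y.1 = x := y.2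
  rw [this]

lemma tv_bound {k : ℕ} (A : Matrix (Fin k) (Fin k) ℤ) (μ : (Fin k → ℤ) → ℝ)
    (hμ0 : ∀ x, 0 ≤ μ x) (hμ1 : HasSum μ 1) (p : ℕ) [NeZero p] (n : ℕ) :
    (2 * tvDist A μ p n) ^ 2 ≤
      ∑ h ∈ Finset.univ.filter (fun h : Fin k → ZMod p => h ≠ 0), ‖pHat A μ p n h‖ ^ 2 := by
  have hp : (p : ℝ) ≠ 0 := by exact_mod_cast (NeZero.ne p)
  have hpc : (p : ℂ) ≠ 0 := by exact_mod_cast (NeZero.ne p)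
  obtain ⟨hc0, hc1⟩ := chain_nonneg_hasSum A μ hμ0 hμ1 n
  set f : (Fin k → ZMod p) → ℝ := fun x => chainDistMod A μ p n x - unif k p with hf
  have h1 : 2 * tvDist A μ p n = ∑ x, |f x| := by
    unfold tvDist; rw [tsum_fintype]; ring
  have hcard : (Finset.univ : Finset (Fin k → ZMod p)).card = p ^ k := by
    rw [Finset.card_univ, Fintype.card_fun, ZMod.card, Fintype.card_fin]
  have h2 : (∑ x, |f x|) ^ 2 ≤ (p : ℝ) ^ k * ∑ x, f x ^ 2 := by
    have := sq_sum_le_card_mul_sum_sq (s := (Finset.univ : Finset (Fin k → ZMod p)))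
      (f := fun x => |f x|)
    rw [hcard] at this
    simpa [sq_abs] using this
  rw [h1]
  refine h2.trans ?_
  rw [← plancherel, Finset.sum_filter]
  refine Finset.sum_le_sum fun h _ => ?_
  have h3 : ∑ x, (f x : ℂ) * ZMod.stdAddChar (h ⬝ᵥ x) =
      pHat A μ p n h - (if h = 0 then 1 else 0) := by
    rw [← sum_fiber A μ hμ0 hμ1]
    simp only [hf, Complex.ofReal_sub, sub_mul, Finset.sum_sub_distrib]
    congr 1
    rw [← Finset.mul_sum]
    simp_rw [dotProduct_comm h]
    rw [char_orth]
    split_ifs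
    · simp [unif, hpc]
    · simp
  rw [h3]
  by_cases hh : h = 0
  · have : pHat A μ p n h = 1 := by
      subst hh
      simp only [pHat, zero_dotProduct, AddChar.map_zero_eq_one, mul_one]
      rw [← Complex.ofReal_tsum, hc1.tsum_eq]; simp
    rw [this]; simp [hh]
  · simp [hh]

lemma vec_ne {k : ℕ} (p : ℕ) [NeZero p] (B : Matrix (Fin k) (Fin k) ℤ)
    (hB : Int.gcd B.det p = 1) :
    Function.Injective (fun u : Fin k → ZMod p => u ᵥ* B.map (Int.cast : ℤ → ZMod p)) := by
  apply Matrix.vecMul_injective_of_isUnit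
  rw [Matrix.isUnit_iff_isUnit_det]
  have h1 : (B.map (Int.cast : ℤ → ZMod p)).det = ((B.det : ℤ) : ZMod p) := by
    have := (Int.castRingHom (ZMod p)).map_det B
    simpa using this.symm
  rw [h1, ZMod.coe_int_isUnit_iff_isCoprime]
  exact (Int.isCoprime_iff_gcd_eq_one.2 hB).symm

lemma vecMul_colMat {k : ℕ} (p : ℕ) (y : Fin k → (Fin k → ℤ)) (u : Fin k → ZMod p) (j : Fin k) :
    (u ᵥ* (colMat y).map (Int.cast : ℤ → ZMod p)) j = u ⬝ᵥ castv p (y j) := by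
  simp [colMat, castv, Matrix.vecMul, dotProduct]

lemma dz_split (p : ℕ) (m : ℕ) (δ : ℝ) (a b : ZMod p)
    (h : δ ≤ dz p (a - (m : ZMod p) * b)) : δ / (1 + m) ≤ dz p a ∨ δ / (1 + m) ≤ dz p b := by
  by_contra! hcon
  obtain ⟨h1, h2⟩ := hcon
  have hm : (0 : ℝ) < 1 + m := by positivity
  have h3 := dz_add_le p a (-((m : ZMod p) * b))
  rw [dz_neg, ← sub_eq_add_neg] at h3
  have h4 := dz_mul_le p m b
  have h5 : (m : ℝ) * dz p b ≤ m * (δ / (1 + m)) := by gcongr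
  have h6 : δ / (1 + m) + m * (δ / (1 + m)) = δ := by field_simp
  linarith

lemma dz_step {k : ℕ} (p : ℕ) (m : ℕ) (δ : ℝ) (u v : Fin k → ZMod p)
    (M : Matrix (Fin k) (Fin k) (ZMod p)) (s : ℕ)
    (h : δ ≤ dz p ((u ᵥ* (M - (m : Matrix (Fin k) (Fin k) (ZMod p))) ᵥ* M ^ s) ⬝ᵥ v)) :
    δ / (1 + m) ≤ dz p ((u ᵥ* M ^ (s + 1)) ⬝ᵥ v) ∨ δ / (1 + m) ≤ dz p ((u ᵥ* M ^ s) ⬝ᵥ v) := by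
  apply dz_split
  convert h using 2
  rw [vecMul_sub, sub_vecMul, sub_dotProduct, vecMul_vecMul, ← pow_succ', vecMul_natCast,
    op_smul_eq_smul, smul_vecMul, smul_dotProduct, smul_eq_mul]

lemma escape {k : ℕ} (M : Matrix (Fin k) (Fin k) ℤ) (y : Fin k → (Fin k → ℤ)) (ms : List ℕ)
    (hms : ∀ m ∈ ms, 2 ≤ m) : ∃ δ : ℝ, 0 < δ ∧ ∀ (p : ℕ) [NeZero p],
      (∀ u : Fin k → ZMod p, u ≠ 0 → ∃ j, u ⬝ᵥ castv p (y j) ≠ 0) →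
      ∀ u : Fin k → ZMod p, u ≠ 0 →
      u ᵥ* (ms.map (fun m : ℕ => M.map (Int.cast : ℤ → ZMod p) -
        (m : Matrix (Fin k) (Fin k) (ZMod p)))).prod = 0 →
      ∃ s ≤ p + ms.length, ∃ j,
        δ ≤ dz p ((u ᵥ* (M.map (Int.cast : ℤ → ZMod p)) ^ s) ⬝ᵥ castv p (y j)) := by
  induction ms with
  | nil =>
    refine ⟨1, one_pos, ?_⟩
    intro p _ _ u hu h0
    simp at h0
    exact absurd h0 hu
  | cons m ms ih =>
    obtain ⟨δ, hδ, H⟩ := ih (fun m hm => hms m (List.mem_cons_of_mem _ hm))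
    have hm : 2 ≤ m := hms m List.mem_cons_self
    refine ⟨min (δ / (1 + m)) (1 / (2 * (m : ℝ))), by positivity, ?_⟩
    intro p _ hB u hu h0
    rw [List.map_cons, List.prod_cons, ← vecMul_vecMul] at h0
    by_cases hz : u ᵥ* (M.map (Int.cast : ℤ → ZMod p) -
        (m : Matrix (Fin k) (Fin k) (ZMod p))) = 0
    · have he : ∀ s, u ᵥ* (M.map (Int.cast : ℤ → ZMod p)) ^ s = ((m : ZMod p) ^ s) • u := by
        intro s
        induction s with
        | zero => simp
        | succ s ihs =>
          rw [vecMul_sub, vecMul_natCast, sub_eq_zero] at hz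
          rw [pow_succ, ← vecMul_vecMul, ihs, smul_vecMul, hz, op_smul_eq_smul,
            smul_smul, pow_succ]
      obtain ⟨j, hj⟩ := hB u hu
      obtain ⟨s, hs, hs2⟩ := dz_escape p m hm _ hj
      refine ⟨s, by omega, j, (min_le_right _ _).trans ?_⟩
      rw [he, smul_dotProduct, smul_eq_mul]
      exact hs2
    · obtain ⟨s, hs, j, hj⟩ := H p hB _ hz h0
      rcases dz_step p m δ _ _ _ s hj with h | h
      · exact ⟨s + 1, by simp; omega, j, (min_le_left _ _).trans h⟩
      · exact ⟨s, by simp; omega, j, (min_le_left _ _).trans h⟩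

lemma escape' {k : ℕ} (M : Matrix (Fin k) (Fin k) ℤ) (y : Fin k → (Fin k → ℤ)) (ms : List ℕ)
    (hms : ∀ m ∈ ms, 2 ≤ m)
    (hM : (M - 1) * (ms.map (fun m : ℕ => M - (m : Matrix (Fin k) (Fin k) ℤ))).prod = 0) :
    ∃ δ : ℝ, 0 < δ ∧ ∀ (p : ℕ) [NeZero p],
      (∀ u : Fin k → ZMod p, u ≠ 0 → ∃ j, u ⬝ᵥ castv p (y j) ≠ 0) →
      ∀ u : Fin k → ZMod p, u ᵥ* M.map (Int.cast : ℤ → ZMod p) ≠ u →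
      ∃ s ≤ p + ms.length + 1, ∃ j,
        δ ≤ dz p ((u ᵥ* (M.map (Int.cast : ℤ → ZMod p)) ^ s) ⬝ᵥ castv p (y j)) := by
  obtain ⟨δ, hδ, H⟩ := escape M y ms hms
  refine ⟨δ / (1 + (1 : ℕ)), by positivity, ?_⟩
  intro p _ hB u hu
  have hne : u ᵥ* (M.map (Int.cast : ℤ → ZMod p) -
      ((1 : ℕ) : Matrix (Fin k) (Fin k) (ZMod p))) ≠ 0 := by
    rw [vecMul_sub, Nat.cast_one, vecMul_one]
    exact sub_ne_zero.2 hu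
  have hprod : (M.map (Int.cast : ℤ → ZMod p) - ((1 : ℕ) : Matrix (Fin k) (Fin k) (ZMod p))) *
      (ms.map (fun m : ℕ => M.map (Int.cast : ℤ → ZMod p) -
        (m : Matrix (Fin k) (Fin k) (ZMod p)))).prod = 0 := by
    have := congrArg (Int.castRingHom (ZMod p)).mapMatrix hM
    rw [map_mul, map_list_prod, map_zero, map_sub, map_one, List.map_map] at this
    rw [Nat.cast_one]
    have hl : ms.map (⇑(Int.castRingHom (ZMod p)).mapMatrix ∘
        fun m : ℕ => M - (m : Matrix (Fin k) (Fin k) ℤ)) =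
        ms.map (fun m : ℕ => M.map (Int.cast : ℤ → ZMod p) -
          (m : Matrix (Fin k) (Fin k) (ZMod p))) := by
      apply List.map_congr_left
      intro m _
      simp only [Function.comp, map_sub, map_natCast]
      rfl
    rw [hl] at this
    exact this
  obtain ⟨s, hs, j, hj⟩ := H p hB _ hne (by rw [vecMul_vecMul, hprod, vecMul_zero])
  rcases dz_step p 1 δ _ _ _ s hj with h | h
  · exact ⟨s + 1, by omega, j, h⟩
  · exact ⟨s, by omega, j, h⟩

lemma sum_blocks (F : ℕ → ℝ) (hF : ∀ t, 0 ≤ F t) (L n : ℕ) :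
    ∑ s ∈ Finset.range (n / L), ∑ m ∈ Finset.range L, F (L * s + m) ≤
      ∑ t ∈ Finset.range n, F t := by
  have h1 : ∀ q : ℕ, ∑ s ∈ Finset.range q, ∑ m ∈ Finset.range L, F (L * s + m) =
      ∑ t ∈ Finset.range (L * q), F t := by
    intro q
    induction q with
    | zero => simp
    | succ q ih => rw [Finset.sum_range_succ, ih, mul_add, mul_one, Finset.sum_range_add]
  rw [h1]
  apply Finset.sum_le_sum_of_subset_of_nonneg
  · exact Finset.range_subset_range.2 (Nat.mul_div_le n L)
  · intros; exact hF _

/-- `G(h) = ∑_j dist(h·y_j / p, ℤ)²` -/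
def gsum {k : ℕ} (p : ℕ) (y : Fin k → (Fin k → ℤ)) (h : Fin k → ZMod p) : ℝ :=
  ∑ j, dz p (h ⬝ᵥ castv p (y j)) ^ 2

lemma gsum_nonneg {k : ℕ} (p : ℕ) (y : Fin k → (Fin k → ℤ)) (h : Fin k → ZMod p) :
    0 ≤ gsum p y h := Finset.sum_nonneg fun j _ => by positivity

lemma map_pow_cast {k : ℕ} (A : Matrix (Fin k) (Fin k) ℤ) (p t : ℕ) :
    (A ^ t).map (Int.cast : ℤ → ZMod p) = (A.map (Int.cast : ℤ → ZMod p)) ^ t :=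
  Matrix.map_pow A (Int.castRingHom (ZMod p)) t

lemma pHat_bound {k : ℕ} (hk : 1 ≤ k) (A : Matrix (Fin k) (Fin k) ℤ) (μ : (Fin k → ℤ) → ℝ)
    (hμ0 : ∀ x, 0 ≤ μ x) (hμ1 : HasSum μ 1)
    (y : Fin k → (Fin k → ℤ)) (hy : ∀ j, y j ∈ VdSet A μ) (L : ℕ) (hL : minpolyDeg A ≤ L) :
    ∃ κ : ℝ, 0 < κ ∧ ∀ (p : ℕ) [NeZero p] (n : ℕ) (h : Fin k → ZMod p),
      ‖pHat A μ p n h‖ ≤ Real.exp (-κ * ∑ s ∈ Finset.range (n / L),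
        gsum p y (h ᵥ* ((A ^ L).map (Int.cast : ℤ → ZMod p)) ^ s)) := by
  have hy' : ∀ j, ∃ a b : Fin k → ℤ, ∃ m : ℕ, μ a ≠ 0 ∧ μ b ≠ 0 ∧ m < L ∧
      y j = (A ^ m).mulVec (a - b) := by
    intro j
    obtain ⟨x, ⟨a, b, ha, hb, rfl⟩, m, hm, hj⟩ := hy j
    exact ⟨a, b, m, ha, hb, by omega, hj⟩
  choose a b m ha hb hm hyj using hy'
  have hne : (Finset.univ : Finset (Fin k)).Nonempty := ⟨⟨0, hk⟩, Finset.mem_univ _⟩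
  have hk0 : (0 : ℝ) < k := by exact_mod_cast hk
  obtain ⟨j0, -, hj0⟩ := Finset.exists_min_image Finset.univ (fun j => 8 * (μ (a j) * μ (b j))) hne
  set κ0 := 8 * (μ (a j0) * μ (b j0)) with hκ0
  have hκpos : 0 < κ0 := by
    have h1 := (hμ0 (a j0)).lt_of_ne (ha j0).symm
    have h2 := (hμ0 (b j0)).lt_of_ne (hb j0).symm
    positivity
  refine ⟨κ0 / k, by positivity, ?_⟩
  intro p _ n h
  have hmu : ∀ g : Fin k → ZMod p, ‖muHat μ p g‖ ≤
      Real.exp (-(κ0 / k) * ∑ j, dz p (g ⬝ᵥ castv p (a j - b j)) ^ 2) := by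
    intro g
    obtain ⟨j1, -, hj1⟩ := Finset.exists_max_image Finset.univ
      (fun j => dz p (g ⬝ᵥ castv p (a j - b j)) ^ 2) hne
    refine (muHat_bound μ hμ0 hμ1 p g (a j1) (b j1)).trans (Real.exp_le_exp.2 ?_)
    have h1 : ∑ j, dz p (g ⬝ᵥ castv p (a j - b j)) ^ 2 ≤
        k * dz p (g ⬝ᵥ castv p (a j1 - b j1)) ^ 2 := by
      have := Finset.sum_le_card_nsmul Finset.univ _ _ hj1
      simpa using this
    have h2 := hj0 j1 (Finset.mem_univ _)
    have h3 : κ0 / k * ∑ j, dz p (g ⬝ᵥ castv p (a j - b j)) ^ 2 ≤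
        κ0 / k * (k * dz p (g ⬝ᵥ castv p (a j1 - b j1)) ^ 2) := by gcongr
    have h4 : κ0 / k * (k * dz p (g ⬝ᵥ castv p (a j1 - b j1)) ^ 2) =
        κ0 * dz p (g ⬝ᵥ castv p (a j1 - b j1)) ^ 2 := by field_simp
    have h5 : κ0 * dz p (g ⬝ᵥ castv p (a j1 - b j1)) ^ 2 ≤
        8 * (μ (a j1) * μ (b j1)) * dz p (g ⬝ᵥ castv p (a j1 - b j1)) ^ 2 :=
      mul_le_mul_of_nonneg_right h2 (by positivity)
    linarith
  rw [pHat_eq A μ hμ0 hμ1, norm_prod]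
  refine (Finset.prod_le_prod (fun _ _ => norm_nonneg _) (fun t _ => hmu _)).trans ?_
  rw [← Real.exp_sum, ← Finset.mul_sum]
  apply Real.exp_le_exp.2
  rw [neg_mul, neg_mul, neg_le_neg_iff]
  refine mul_le_mul_of_nonneg_left ?_ (by positivity)
  refine le_trans ?_ (sum_blocks _ (fun t => Finset.sum_nonneg fun j _ => by positivity) L n)
  refine Finset.sum_le_sum fun s _ => ?_
  rw [Finset.sum_comm]
  refine Finset.sum_le_sum fun j _ => ?_
  refine le_trans (le_of_eq ?_) (Finset.single_le_sum
    (f := fun i => dz p (h ᵥ* (A.map (Int.cast : ℤ → ZMod p)) ^ (L * s + i) ⬝ᵥ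
      castv p (a j - b j)) ^ 2) (fun i _ => by positivity) (Finset.mem_range.2 (hm j)))
  rw [hyj j, castv_mulVec, dotProduct_mulVec, map_pow_cast, map_pow_cast, ← pow_mul,
    vecMul_vecMul, ← pow_add]

lemma exists_list {k : ℕ} (hk : 1 ≤ k) (A : Matrix (Fin k) (Fin k) ℤ)
    (hEig : ∀ lam : ℂ, (A.map (Int.cast : ℤ → ℂ)).charpoly.IsRoot lam →
      lam ≠ 0 ∧ ∃ l : ℕ, 0 < l ∧ ∃ m : ℕ, 0 < m ∧ lam ^ l = (m : ℂ))
    (lam : ℕ → ℂ)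
    (hmin : (minpoly ℚ (A.map (Int.cast : ℤ → ℚ))).map (algebraMap ℚ ℂ) =
      ∏ i ∈ Finset.range (minpolyDeg A), (Polynomial.X - Polynomial.C (lam i)))
    (hlam1 : ‖lam 0‖ = 1)
    (hlami : ∀ i, 0 < i → i < minpolyDeg A → 1 < ‖lam i‖) :
    ∃ L : ℕ, 0 < L ∧ minpolyDeg A ≤ L ∧ ∃ ms : List ℕ, (∀ m ∈ ms, 2 ≤ m) ∧
      (A ^ L - 1) * (ms.map (fun m : ℕ => A ^ L - (m : Matrix (Fin k) (Fin k) ℤ))).prod = 0 := by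
  have : Nonempty (Fin k) := ⟨⟨0, hk⟩⟩
  set AQ := A.map (Int.cast : ℤ → ℚ) with hAQ
  set AC := A.map (Int.cast : ℤ → ℂ) with hAC
  have hACQ : AC = (algebraMap ℚ ℂ).mapMatrix AQ := by
    ext i j; simp [hAC, hAQ]
  -- the minimal polynomial over ℚ annihilates A over ℂ
  have hann : Polynomial.aeval AC ((minpoly ℚ AQ).map (algebraMap ℚ ℂ)) = 0 := by
    have h1 := minpoly.aeval ℚ AQ
    rw [Polynomial.aeval_map_algebraMap, hACQ]
    have h2 := Polynomial.aeval_algHom_apply ((Algebra.ofId ℚ ℂ).mapMatrix (m := Fin k)) AQ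
      (minpoly ℚ AQ)
    rw [h1, map_zero] at h2
    exact h2
  have hdpos : 0 < minpolyDeg A := minpoly.natDegree_pos (Algebra.IsIntegral.isIntegral AQ)
  obtain ⟨d, hd⟩ : ∃ d, minpolyDeg A = d + 1 := ⟨minpolyDeg A - 1, by omega⟩
  have hroot : ∀ i, i < d + 1 → AC.charpoly.IsRoot (lam i) := by
    intro i hi
    have h1 : (minpoly ℚ AQ).map (algebraMap ℚ ℂ) ∣ AC.charpoly := by
      have := Polynomial.map_dvd (algebraMap ℚ ℂ) (Matrix.minpoly_dvd_charpoly AQ)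
      rw [← Matrix.charpoly_map] at this
      rw [hACQ]; exact this
    refine Polynomial.IsRoot.dvd ?_ h1
    rw [hmin, hd, Polynomial.IsRoot, Polynomial.eval_prod]
    exact Finset.prod_eq_zero (Finset.mem_range.2 hi) (by simp)
  have hex : ∀ i, ∃ l : ℕ, 0 < l ∧ ∃ m : ℕ, 0 < m ∧ (i < d + 1 → lam i ^ l = (m : ℂ)) := by
    intro i
    by_cases hi : i < d + 1
    · obtain ⟨-, l, hl, m, hm, h⟩ := hEig _ (hroot i hi)
      exact ⟨l, hl, m, hm, fun _ => h⟩
    · exact ⟨1, one_pos, 1, one_pos, fun h => absurd h hi⟩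
  choose l hl m hm hlm using hex
  set L := (d + 1) * ∏ i ∈ Finset.range (d + 1), l i with hL
  have hprodpos : 0 < ∏ i ∈ Finset.range (d + 1), l i := Finset.prod_pos fun i _ => hl i
  have hLpos : 0 < L := by positivity
  have hex2 : ∀ i, ∃ m : ℕ, i < d + 1 → lam i ^ L = (m : ℂ) := by
    intro i
    by_cases hi : i < d + 1
    · have : l i ∣ L := Dvd.dvd.mul_left (Finset.dvd_prod_of_mem l (Finset.mem_range.2 hi)) _
      obtain ⟨q, hq⟩ := this
      refine ⟨m i ^ q, fun _ => ?_⟩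
      rw [hq, pow_mul, hlm i hi]; push_cast; rfl
    · exact ⟨1, fun h => absurd h hi⟩
  choose e he using hex2
  have hnorm : ∀ i, i < d + 1 → ‖lam i‖ ^ L = (e i : ℝ) := by
    intro i hi
    rw [← norm_pow, he i hi]; simp
  have he0 : e 0 = 1 := by
    have := hnorm 0 (by omega)
    rw [hlam1, one_pow] at this
    exact_mod_cast this.symm
  have hei : ∀ i, 0 < i → i < d + 1 → 2 ≤ e i := by
    intro i hi hi2
    have h1 := hnorm i hi2
    have h2 : 1 < ‖lam i‖ ^ L := one_lt_pow₀ (hlami i hi (by omega)) (by omega)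
    rw [h1] at h2
    exact_mod_cast h2
  refine ⟨L, hLpos, by rw [hd]; exact Nat.le_mul_of_pos_right _ hprodpos,
    (List.range d).map (fun i => e (i + 1)), ?_, ?_⟩
  · intro x hx
    simp only [List.mem_map, List.mem_range] at hx
    obtain ⟨i, hi, rfl⟩ := hx
    exact hei _ (by omega) (by omega)
  -- divisibility of polynomials
  have hdvd : (∏ i ∈ Finset.range (d + 1), (Polynomial.X - Polynomial.C (lam i))) ∣
      ∏ i ∈ Finset.range (d + 1), ((Polynomial.X : Polynomial ℂ) ^ L - (e i : Polynomial ℂ)) := by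
    refine Finset.prod_dvd_prod_of_dvd _ _ fun i hi => ?_
    rw [Polynomial.dvd_iff_isRoot, Polynomial.IsRoot]
    simp [he i (Finset.mem_range.1 hi)]
  have hz : Polynomial.aeval AC (∏ i ∈ Finset.range (d + 1),
      ((Polynomial.X : Polynomial ℂ) ^ L - (e i : Polynomial ℂ))) = 0 := by
    obtain ⟨q, hq⟩ := hdvd
    rw [hq, map_mul, ← hd, ← hmin, hann, zero_mul]
  have hlist : ∏ i ∈ Finset.range (d + 1),
      ((Polynomial.X : Polynomial ℂ) ^ L - (e i : Polynomial ℂ)) =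
      (Polynomial.X ^ L - 1) * ((List.range d).map
        (fun i => (Polynomial.X : Polynomial ℂ) ^ L - (e (i + 1) : Polynomial ℂ))).prod := by
    rw [Finset.prod_range_succ', mul_comm, he0, Nat.cast_one]
    congr 1
  rw [hlist, map_mul, map_list_prod, List.map_map] at hz
  have hinj : Function.Injective ((Int.castRingHom ℂ).mapMatrix (m := Fin k)) := by
    intro X Y hXY
    ext i j
    have := congrFun (congrFun hXY i) j
    simpa using this
  apply hinj
  rw [map_mul, map_list_prod, map_zero, List.map_map, List.map_map]
  rw [← hz]
  have hA' : (Int.castRingHom ℂ).mapMatrix A = AC := rfl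
  congr 1
  · simp only [map_sub, map_pow, map_one, hA', Polynomial.aeval_X]
  · congr 1
    apply List.map_congr_left
    intro i _
    simp only [map_sub, map_pow, map_natCast, hA', Polynomial.aeval_X, Function.comp]

lemma summable_exp_int : Summable (fun v : ℤ => Real.exp (-(v.natAbs : ℝ))) := by
  apply Summable.of_nat_of_neg
  · simpa using Real.summable_exp_neg_nat
  · simpa using Real.summable_exp_neg_nat

lemma sum_zmod_le (p : ℕ) [NeZero p] (t : ℝ) (ht : 1 ≤ t) :
    ∑ g : ZMod p, Real.exp (-t * (g.valMinAbs.natAbs : ℝ) ^ 2) ≤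
      ∑' v : ℤ, Real.exp (-(v.natAbs : ℝ)) := by
  calc ∑ g : ZMod p, Real.exp (-t * (g.valMinAbs.natAbs : ℝ) ^ 2)
      ≤ ∑ g : ZMod p, Real.exp (-(g.valMinAbs.natAbs : ℝ)) := by
        refine Finset.sum_le_sum fun g _ => Real.exp_le_exp.2 ?_
        have h1 : ((g.valMinAbs.natAbs : ℕ) : ℝ) ≤ (g.valMinAbs.natAbs : ℝ) ^ 2 := by
          exact_mod_cast Nat.le_self_pow (by norm_num) _
        nlinarith [sq_nonneg (g.valMinAbs.natAbs : ℝ)]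
    _ = ∑' g : ZMod p, Real.exp (-(g.valMinAbs.natAbs : ℝ)) := by rw [tsum_fintype]
    _ ≤ _ := by
        have hinj : Function.Injective (ZMod.valMinAbs : ZMod p → ℤ) := by
          intro a b hab
          rw [← ZMod.coe_valMinAbs a, hab, ZMod.coe_valMinAbs]
        exact tsum_comp_le_tsum_of_inj summable_exp_int (fun _ => (Real.exp_pos _).le) hinj

lemma sum_case1 {k : ℕ} (p : ℕ) [NeZero p] (t : ℝ) (ht : 1 ≤ t) :
    ∑ g ∈ Finset.univ.filter (fun g : Fin k → ZMod p => g ≠ 0),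
      Real.exp (-(2 * t) * ∑ j, ((g j).valMinAbs.natAbs : ℝ) ^ 2) ≤
      (∑' v : ℤ, Real.exp (-(v.natAbs : ℝ))) ^ k * Real.exp (-t) := by
  calc ∑ g ∈ Finset.univ.filter (fun g : Fin k → ZMod p => g ≠ 0),
      Real.exp (-(2 * t) * ∑ j, ((g j).valMinAbs.natAbs : ℝ) ^ 2)
      ≤ ∑ g ∈ Finset.univ.filter (fun g : Fin k → ZMod p => g ≠ 0),
        Real.exp (-t) * ∏ j, Real.exp (-t * ((g j).valMinAbs.natAbs : ℝ) ^ 2) := by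
        refine Finset.sum_le_sum fun g hg => ?_
        rw [← Real.exp_sum, ← Real.exp_add, ← Finset.mul_sum]
        apply Real.exp_le_exp.2
        have hg' : g ≠ 0 := (Finset.mem_filter.1 hg).2
        obtain ⟨i, hi⟩ : ∃ i, g i ≠ 0 := by
          by_contra! hcon
          exact hg' (funext hcon)
        have h1 : (1 : ℝ) ≤ ((g i).valMinAbs.natAbs : ℝ) ^ 2 := by
          have : (g i).valMinAbs ≠ 0 := fun h => hi ((ZMod.valMinAbs_eq_zero _).1 h)
          have h2 : 1 ≤ (g i).valMinAbs.natAbs := by omega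
          exact_mod_cast Nat.one_le_pow _ _ h2
        have h3 : ((g i).valMinAbs.natAbs : ℝ) ^ 2 ≤ ∑ j, ((g j).valMinAbs.natAbs : ℝ) ^ 2 :=
          Finset.single_le_sum (f := fun j => ((g j).valMinAbs.natAbs : ℝ) ^ 2)
            (fun j _ => by positivity) (Finset.mem_univ i)
        nlinarith
    _ ≤ ∑ g : Fin k → ZMod p,
        Real.exp (-t) * ∏ j, Real.exp (-t * ((g j).valMinAbs.natAbs : ℝ) ^ 2) := by
        apply Finset.sum_le_sum_of_subset_of_nonneg (Finset.filter_subset _ _)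
        intros; positivity
    _ = (∑ g : ZMod p, Real.exp (-t * (g.valMinAbs.natAbs : ℝ) ^ 2)) ^ k * Real.exp (-t) := by
        rw [← Finset.mul_sum, mul_comm]
        congr 1
        have h2 := Finset.prod_univ_sum (fun _ : Fin k => (Finset.univ : Finset (ZMod p)))
          (fun _ g => Real.exp (-t * (g.valMinAbs.natAbs : ℝ) ^ 2))
        rw [Fintype.piFinset_univ] at h2
        rw [← h2]
        simp
    _ ≤ _ := by
        gcongr
        exact sum_zmod_le p t ht

lemma half_div (x w : ℕ) (hw : 0 < w) (h : w ≤ x) : (x : ℝ) / (2 * w) ≤ ((x / w : ℕ) : ℝ) := by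
  have h1 : x < w * (x / w + 1) := Nat.lt_mul_div_succ x hw
  have h2 : 1 ≤ x / w := (Nat.one_le_div_iff hw).2 h
  have h3 : x ≤ (x / w) * (2 * w) := by nlinarith
  rw [div_le_iff₀ (by positivity)]
  exact_mod_cast h3

lemma case2_sum {k : ℕ} (A : Matrix (Fin k) (Fin k) ℤ) (y : Fin k → (Fin k → ℤ)) (L ln : ℕ)
    (δ : ℝ) (hδ : 0 < δ) (p : ℕ) [NeZero p] (hp : ln + 1 < p) (hgA : Int.gcd A.det p = 1)
    (hesc : ∀ u : Fin k → ZMod p, u ᵥ* (A ^ L).map (Int.cast : ℤ → ZMod p) ≠ u →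
      ∃ s ≤ p + ln + 1, ∃ j,
        δ ≤ dz p ((u ᵥ* ((A ^ L).map (Int.cast : ℤ → ZMod p)) ^ s) ⬝ᵥ castv p (y j)))
    (h : Fin k → ZMod p) (hh : h ᵥ* (A ^ L).map (Int.cast : ℤ → ZMod p) ≠ h) (q : ℕ) :
    ((q / (2 * p) : ℕ) : ℝ) * δ ^ 2 ≤ ∑ s ∈ Finset.range q,
        gsum p y (h ᵥ* ((A ^ L).map (Int.cast : ℤ → ZMod p)) ^ s) := by
  refine le_trans ?_ (sum_blocks _ (fun t => gsum_nonneg p y _) (2 * p) q)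
  have hcard := Finset.card_nsmul_le_sum (Finset.range (q / (2 * p)))
    (fun s => ∑ m ∈ Finset.range (2 * p),
      gsum p y (h ᵥ* ((A ^ L).map (Int.cast : ℤ → ZMod p)) ^ (2 * p * s + m))) (δ ^ 2) ?_
  · simpa using hcard
  intro s _
  set Mp := (A ^ L).map (Int.cast : ℤ → ZMod p) with hMp
  have hne : h ᵥ* Mp ^ (2 * p * s) ᵥ* Mp ≠ h ᵥ* Mp ^ (2 * p * s) := by
    intro hcon
    apply hh
    have hinj := vec_ne p ((A ^ L) ^ (2 * p * s)) (by
      rw [Matrix.det_pow, Matrix.det_pow]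
      exact Int.isCoprime_iff_gcd_eq_one.1
        ((Int.isCoprime_iff_gcd_eq_one.2 hgA).pow_left.pow_left))
    apply hinj
    simp only
    rw [map_pow_cast, ← hMp, vecMul_vecMul, ← pow_succ', pow_succ, ← vecMul_vecMul]
    exact hcon
  obtain ⟨i, hi, j, hj⟩ := hesc _ hne
  rw [vecMul_vecMul, ← pow_add] at hj
  refine le_trans ?_ (Finset.single_le_sum (f := fun m => gsum p y (h ᵥ* Mp ^ (2 * p * s + m)))
    (fun i _ => gsum_nonneg p y _) (Finset.mem_range.2 (show i < 2 * p by omega)))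
  refine le_trans ?_ (Finset.single_le_sum
    (f := fun j => dz p (h ᵥ* Mp ^ (2 * p * s + i) ⬝ᵥ castv p (y j)) ^ 2)
    (fun i _ => by positivity) (Finset.mem_univ j))
  exact pow_le_pow_left₀ hδ.le hj 2

lemma case1_sum {k : ℕ} (y : Fin k → (Fin k → ℤ))
    (p : ℕ) [NeZero p] (M : Matrix (Fin k) (Fin k) (ZMod p))
    (h : Fin k → ZMod p) (hh : h ᵥ* M = h) (q : ℕ) :
    ∑ s ∈ Finset.range q, gsum p y (h ᵥ* M ^ s) =
      q / (p : ℝ) ^ 2 * ∑ j, (((h ᵥ* (colMat y).map (Int.cast : ℤ → ZMod p)) j).valMinAbs.natAbs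
        : ℝ) ^ 2 := by
  have h1 : ∀ s, h ᵥ* M ^ s = h := by
    intro s
    induction s with
    | zero => simp
    | succ s ih => rw [pow_succ, ← vecMul_vecMul, ih, hh]
  simp_rw [h1, vecMul_colMat]
  simp only [gsum, dz, div_pow, ← Finset.sum_div, Finset.sum_const, Finset.card_range, nsmul_eq_mul]
  ring

/-- **Theorem 3.9**: suppose every (complex) eigenvalue `λ` of `A` is nonzero and satisfies
`λ^l ∈ ℕ*` for some positive integer `l`, and the roots `λ_1, …, λ_d` of the minimal
polynomial of `A` (of degree `d`) satisfy `|λ_1| = 1` and `|λ_i| > 1` for `i = 2, …, d`;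
assume also that the support of `μ` is not parallel to a proper subspace of `ℚ^k` invariant
under `A`.  Then there are `α, c > 0` and `N ∈ ℕ` such that for all `p > N` with
`gcd(det A, p) = gcd(det B, p) = 1` and all `n ≥ c p²`,
`‖P_n − U‖ ≤ 2^{k−1} exp(−α n / p²)`. -/
theorem slow_uniformity_p_sq (k : ℕ) (hk : 1 ≤ k)
    (A : Matrix (Fin k) (Fin k) ℤ) (hA : A.det ≠ 0)
    (hEig : ∀ lam : ℂ, (A.map (Int.cast : ℤ → ℂ)).charpoly.IsRoot lam →
      lam ≠ 0 ∧ ∃ l : ℕ, 0 < l ∧ ∃ m : ℕ, 0 < m ∧ lam ^ l = (m : ℂ))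
    (lam : ℕ → ℂ)
    (hmin : (minpoly ℚ (A.map (Int.cast : ℤ → ℚ))).map (algebraMap ℚ ℂ) =
      ∏ i ∈ Finset.range (minpolyDeg A), (Polynomial.X - Polynomial.C (lam i)))
    (hlam1 : ‖lam 0‖ = 1)
    (hlami : ∀ i, 0 < i → i < minpolyDeg A → 1 < ‖lam i‖)
    (μ : (Fin k → ℤ) → ℝ) (hμ0 : ∀ x, 0 ≤ μ x) (hμ1 : HasSum μ 1)
    (hpar : ¬ ParallelInv A μ)
    (y : Fin k → (Fin k → ℤ)) (hy : ∀ j, y j ∈ VdSet A μ)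
    (hybasis : (colMat y).det ≠ 0) :
    ∃ (a c : ℝ) (N : ℕ), 0 < a ∧ 0 < c ∧
      ∀ p : ℕ, N < p → Int.gcd A.det p = 1 → Int.gcd (colMat y).det p = 1 →
        ∀ n : ℕ, c * (p : ℝ) ^ 2 ≤ n →
          tvDist A μ p n ≤ 2 ^ (k - 1) * Real.exp (-(a * n) / (p : ℝ) ^ 2) := by
  obtain ⟨L, hLpos, hLd, ms, hms, hM⟩ := exists_list hk A hEig lam hmin hlam1 hlami
  obtain ⟨δ, hδ, hesc⟩ := escape' (A ^ L) y ms hms hM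
  obtain ⟨κ, hκ, hP⟩ := pHat_bound hk A μ hμ0 hμ1 y hy L hLd
  set S : ℝ := ∑' v : ℤ, Real.exp (-(v.natAbs : ℝ)) with hS
  have hS0 : 0 ≤ S := tsum_nonneg fun v => (Real.exp_pos _).le
  have hL0 : (0 : ℝ) < L := by exact_mod_cast hLpos
  set β : ℝ := κ * δ ^ 2 / (4 * L) with hβ
  set γ : ℝ := κ / (2 * L) with hγ
  have hβ0 : 0 < β := by positivity
  have hγ0 : 0 < γ := by positivity
  set η : ℝ := min β γ with hη
  have hη0 : 0 < η := lt_min hβ0 hγ0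
  have hlog : 0 ≤ Real.log (1 + S ^ k) := Real.log_nonneg (by linarith [pow_nonneg hS0 k])
  refine ⟨η / 4, k / β + 1 / γ + 2 * Real.log (1 + S ^ k) / η + 2 * L, ms.length + 1,
    by positivity, by positivity, ?_⟩
  intro p hpN hgA hgB n hn
  have hp0 : p ≠ 0 := by omega
  haveI : NeZero p := ⟨hp0⟩
  have hp1 : (1 : ℝ) ≤ p := by exact_mod_cast Nat.one_le_iff_ne_zero.2 hp0
  have hpp : (0 : ℝ) < (p : ℝ) ^ 2 := by positivity
  set x : ℝ := n / (p : ℝ) ^ 2 with hx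
  have hcx : k / β + 1 / γ + 2 * Real.log (1 + S ^ k) / η + 2 * L ≤ x := by
    rw [hx, le_div_iff₀ hpp]; exact hn
  have hn1 : 0 ≤ (k : ℝ) / β := by positivity
  have hn2 : 0 ≤ 1 / γ := by positivity
  have hn3 : 0 ≤ 2 * Real.log (1 + S ^ k) / η := by positivity
  have hx0 : 0 ≤ x := by positivity
  have hnx : (n : ℝ) = x * (p : ℝ) ^ 2 := by rw [hx]; field_simp
  have hx1 : k ≤ β * x := by
    have : (k : ℝ) / β ≤ x := by linarith
    rw [div_le_iff₀ hβ0] at this; linarith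
  have hx2 : 1 ≤ γ * x := by
    have : 1 / γ ≤ x := by linarith
    rw [div_le_iff₀ hγ0] at this; linarith
  have hx3 : Real.log (1 + S ^ k) ≤ η / 2 * x := by
    have : 2 * Real.log (1 + S ^ k) / η ≤ x := by linarith
    rw [div_le_iff₀ hη0] at this; linarith
  have hx4 : 2 * L * p ≤ n := by
    have h1 : 2 * (L : ℝ) ≤ x := by linarith
    have h2 : 2 * (L : ℝ) * p ≤ n := by
      rw [hnx]
      have : (p : ℝ) ≤ (p : ℝ) ^ 2 := by nlinarith
      gcongr
    exact_mod_cast h2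
  have hBinj := vec_ne p (colMat y) hgB
  have hB : ∀ u : Fin k → ZMod p, u ≠ 0 → ∃ j, u ⬝ᵥ castv p (y j) ≠ 0 := by
    intro u hu
    by_contra! hcon
    apply hu
    apply hBinj
    funext j
    simp only [zero_vecMul]
    rw [vecMul_colMat]
    simpa using hcon j
  have hesc' := hesc p hB
  set Mp := (A ^ L).map (Int.cast : ℤ → ZMod p) with hMp
  -- the two kinds of frequencies
  have hterm : ∀ h : Fin k → ZMod p, ‖pHat A μ p n h‖ ^ 2 ≤
      Real.exp (-(2 * (γ * x)) * ∑ j, (((h ᵥ* (colMat y).map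
        (Int.cast : ℤ → ZMod p)) j).valMinAbs.natAbs : ℝ) ^ 2) +
      Real.exp (-(β * x)) / (p : ℝ) ^ k := by
    intro h
    have h0 : ‖pHat A μ p n h‖ ^ 2 ≤ Real.exp (-(2 * κ) * ∑ s ∈ Finset.range (n / L),
        gsum p y (h ᵥ* Mp ^ s)) := by
      refine (pow_le_pow_left₀ (norm_nonneg _) (hP p n h) 2).trans (le_of_eq ?_)
      rw [← Real.exp_nat_mul]
      congr 1
      push_cast
      ring
    refine h0.trans ?_
    by_cases hh : h ᵥ* Mp = h
    · refine le_trans ?_ (le_add_of_nonneg_right (by positivity))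
      rw [case1_sum y p Mp h hh]
      apply Real.exp_le_exp.2
      have hq := half_div n L hLpos (by nlinarith)
      set T := ∑ j, (((h ᵥ* (colMat y).map
        (Int.cast : ℤ → ZMod p)) j).valMinAbs.natAbs : ℝ) ^ 2 with hT
      have hT0 : 0 ≤ T := Finset.sum_nonneg fun j _ => by positivity
      have e1 : 2 * (γ * x) * T = 2 * κ * ((n : ℝ) / (2 * L) / (p : ℝ) ^ 2 * T) := by
        rw [hγ, hx]; field_simp
      have e2 : (n : ℝ) / (2 * L) / (p : ℝ) ^ 2 * T ≤ ((n / L : ℕ) : ℝ) / (p : ℝ) ^ 2 * T := by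
        gcongr
      have e3 := mul_le_mul_of_nonneg_left e2 (show 0 ≤ 2 * κ by positivity)
      linarith
    · refine le_trans ?_ (le_add_of_nonneg_left (Real.exp_pos _).le)
      have hq := case2_sum A y L ms.length δ hδ p hpN hgA hesc' h hh (n / L)
      rw [Nat.div_div_eq_div_mul] at hq
      have hq2 := half_div n (L * (2 * p)) (by positivity) (by nlinarith)
      have e1 : (n : ℝ) / (2 * ((L * (2 * p) : ℕ) : ℝ)) * δ ^ 2 ≤
          ∑ s ∈ Finset.range (n / L), gsum p y (h ᵥ* Mp ^ s) :=
        (mul_le_mul_of_nonneg_right hq2 (by positivity)).trans hq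
      have e2 := mul_le_mul_of_nonneg_left e1 (show 0 ≤ 2 * κ by positivity)
      have e3 : 2 * κ * ((n : ℝ) / (2 * ((L * (2 * p) : ℕ) : ℝ)) * δ ^ 2) = 2 * (β * x * p) := by
        rw [hβ, hnx]; push_cast; field_simp; ring
      rw [e3] at e2
      have e4 : β * x ≤ β * x * p := le_mul_of_one_le_right (by positivity) hp1
      have e5 : (k : ℝ) * p ≤ β * x * p := by gcongr
      have e6 : (p : ℝ) ^ k ≤ Real.exp (k * p) := by
        rw [Real.exp_nat_mul]
        have := Real.add_one_le_exp (p : ℝ)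
        gcongr
        linarith
      rw [le_div_iff₀ (by positivity)]
      calc Real.exp (-(2 * κ) * ∑ s ∈ Finset.range (n / L), gsum p y (h ᵥ* Mp ^ s)) * (p : ℝ) ^ k
          ≤ Real.exp (-(2 * κ) * ∑ s ∈ Finset.range (n / L), gsum p y (h ᵥ* Mp ^ s)) *
            Real.exp (k * p) := by gcongr
        _ = Real.exp (-(2 * κ) * ∑ s ∈ Finset.range (n / L), gsum p y (h ᵥ* Mp ^ s) + k * p) := by
            rw [Real.exp_add]
        _ ≤ _ := Real.exp_le_exp.2 (by linarith)
  have htot : (2 * tvDist A μ p n) ^ 2 ≤ (1 + S ^ k) * Real.exp (-(η * x)) := by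
    refine (tv_bound A μ hμ0 hμ1 p n).trans ?_
    refine (Finset.sum_le_sum fun h _ => hterm h).trans ?_
    rw [Finset.sum_add_distrib]
    have t1 : ∑ h ∈ Finset.univ.filter (fun h : Fin k → ZMod p => h ≠ 0),
        Real.exp (-(2 * (γ * x)) * ∑ j, (((h ᵥ* (colMat y).map
        (Int.cast : ℤ → ZMod p)) j).valMinAbs.natAbs : ℝ) ^ 2) ≤ S ^ k * Real.exp (-(γ * x)) := by
      refine le_trans ?_ (sum_case1 (k := k) p (γ * x) hx2)
      rw [← Finset.sum_image (s := Finset.univ.filter (fun h : Fin k → ZMod p => h ≠ 0))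
        (g := fun h => h ᵥ* (colMat y).map (Int.cast : ℤ → ZMod p))
        (f := fun g => Real.exp (-(2 * (γ * x)) * ∑ j, ((g j).valMinAbs.natAbs : ℝ) ^ 2))
        (hBinj.injOn)]
      apply Finset.sum_le_sum_of_subset_of_nonneg
      · intro g hg
        obtain ⟨h, hh, rfl⟩ := Finset.mem_image.1 hg
        refine Finset.mem_filter.2 ⟨Finset.mem_univ _, fun hcon => (Finset.mem_filter.1 hh).2 ?_⟩
        apply hBinj
        simpa using hcon
      · intros; positivity
    have t2 : ∑ h ∈ Finset.univ.filter (fun h : Fin k → ZMod p => h ≠ 0),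
        Real.exp (-(β * x)) / (p : ℝ) ^ k ≤ Real.exp (-(β * x)) := by
      have hcard : (Finset.univ : Finset (Fin k → ZMod p)).card = p ^ k := by
        rw [Finset.card_univ, Fintype.card_fun, ZMod.card, Fintype.card_fin]
      refine (Finset.sum_le_sum_of_subset_of_nonneg (Finset.filter_subset _ _)
        (fun _ _ _ => by positivity)).trans (le_of_eq ?_)
      rw [Finset.sum_const, hcard, nsmul_eq_mul]
      push_cast
      field_simp
    have t3 : Real.exp (-(γ * x)) ≤ Real.exp (-(η * x)) := by
      apply Real.exp_le_exp.2
      have : η * x ≤ γ * x := mul_le_mul_of_nonneg_right (min_le_right _ _) hx0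
      linarith
    have t4 : Real.exp (-(β * x)) ≤ Real.exp (-(η * x)) := by
      apply Real.exp_le_exp.2
      have : η * x ≤ β * x := mul_le_mul_of_nonneg_right (min_le_left _ _) hx0
      linarith
    have t5 := mul_le_mul_of_nonneg_left t3 (pow_nonneg hS0 k)
    linarith
  have hSk : 0 < 1 + S ^ k := by positivity
  have hfin : (2 * tvDist A μ p n) ^ 2 ≤ Real.exp (-(η / 4 * x)) ^ 2 := by
    refine htot.trans ?_
    rw [← Real.exp_nat_mul]
    nth_rewrite 1 [← Real.exp_log hSk]
    rw [← Real.exp_add]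
    apply Real.exp_le_exp.2
    push_cast
    linarith
  have h2 : 2 * tvDist A μ p n ≤ Real.exp (-(η / 4 * x)) :=
    le_of_sq_le_sq hfin (Real.exp_pos _).le
  have h3 : -(η / 4 * n) / (p : ℝ) ^ 2 = -(η / 4 * x) := by rw [hx]; ring
  rw [h3]
  have h4 : (1 : ℝ) ≤ 2 ^ (k - 1) := one_le_pow₀ (by norm_num)
  have h5 := mul_le_mul_of_nonneg_right h4 (Real.exp_pos (-(η / 4 * x))).le
  linarith [Real.exp_pos (-(η / 4 * x))]
end
end

section
/- Suppose A has a complex eigenvalue λ with |λ| > 1, the support of μ is not parallel to a proper subspace of ℚ^k invariant under A, and E[‖B_n‖_∞²] < ∞. Then there exist a constant c > 0, N ∈ ℕ, and a function η : ℕ → ℝ with η(p) → 1 as p → ∞, such that for every integer p > N with gcd(det(A), p) = 1 and gcd(det(B), p) = 1, and every n ≤ c·ln p, one has ‖P_n − U‖ ≥ (1/2)·η(p). Consequently, O(ln p) steps are needed to reach the uniform distribution. -/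
open scoped BigOperators
open Matrix

noncomputable section

/-- The `ℓ¹` norm of an integer vector. -/
def nrm {k : ℕ} (x : Fin k → ℤ) : ℕ := ∑ i, (x i).natAbs

lemma nrm_add {k : ℕ} (x y : Fin k → ℤ) : nrm (x + y) ≤ nrm x + nrm y := by
  unfold nrm
  rw [← Finset.sum_add_distrib]
  exact Finset.sum_le_sum fun i _ => Int.natAbs_add_le _ _

/-- A bound for the operator norm of `A`. -/
def opBd {k : ℕ} (A : Matrix (Fin k) (Fin k) ℤ) : ℕ := ∑ i, ∑ j, (A i j).natAbs

lemma natAbs_sum_le_sum {ι : Type*} (s : Finset ι) (f : ι → ℤ) :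
    (∑ i ∈ s, f i).natAbs ≤ ∑ i ∈ s, (f i).natAbs := by
  classical
  induction s using Finset.induction_on with
  | empty => simp
  | insert a s ha ih =>
    rw [Finset.sum_insert ha, Finset.sum_insert ha]
    exact (Int.natAbs_add_le _ _).trans (by omega)

lemma nrm_mulVec {k : ℕ} (A : Matrix (Fin k) (Fin k) ℤ) (y : Fin k → ℤ) :
    nrm (A.mulVec y) ≤ opBd A * nrm y := by
  unfold nrm opBd
  rw [Finset.sum_mul]
  refine Finset.sum_le_sum fun i _ => ?_
  rw [Finset.sum_mul]
  unfold Matrix.mulVec dotProduct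
  refine (natAbs_sum_le_sum _ _).trans (Finset.sum_le_sum fun j _ => ?_)
  rw [Int.natAbs_mul]
  exact Nat.mul_le_mul_left _
    (Finset.single_le_sum (f := fun i => (y i).natAbs) (fun _ _ => Nat.zero_le _)
      (Finset.mem_univ j))

/-- The chain distribution in extended nonnegative reals. -/
def chE {k : ℕ} (A : Matrix (Fin k) (Fin k) ℤ) (m : (Fin k → ℤ) → ENNReal) :
    ℕ → (Fin k → ℤ) → ENNReal
  | 0 => fun x => if x = 0 then 1 else 0
  | n + 1 => fun x => ∑' y : Fin k → ℤ, chE A m n y * m (x - A.mulVec y)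

lemma chE_tsum {k : ℕ} (A : Matrix (Fin k) (Fin k) ℤ) (m g : (Fin k → ℤ) → ENNReal) (n : ℕ) :
    ∑' x, chE A m (n + 1) x * g x
      = ∑' y, chE A m n y * ∑' h, m h * g (h + A.mulVec y) := by
  simp only [chE]
  simp_rw [← ENNReal.tsum_mul_right]
  rw [ENNReal.tsum_comm]
  refine tsum_congr fun y => ?_
  rw [← ENNReal.tsum_mul_left, ← (Equiv.addRight (A.mulVec y)).tsum_eq]
  refine tsum_congr fun h => ?_
  simp [mul_assoc]

lemma chE_total {k : ℕ} (A : Matrix (Fin k) (Fin k) ℤ) (m : (Fin k → ℤ) → ENNReal)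
    (hm : ∑' h, m h = 1) (n : ℕ) : ∑' x, chE A m n x = 1 := by
  induction n with
  | zero => simp [chE]
  | succ n ih =>
    have := chE_tsum A m (fun _ => 1) n
    simpa [hm, ih] using this

lemma chE_moment {k : ℕ} (A : Matrix (Fin k) (Fin k) ℤ) (m : (Fin k → ℤ) → ENNReal)
    (hm : ∑' h, m h = 1) (n : ℕ) :
    ∑' x, chE A m n x * (nrm x : ENNReal)
      ≤ (∑' h, m h * (nrm h : ENNReal)) * ((opBd A + 2 : ℕ) : ENNReal) ^ n := by
  induction n with
  | zero =>
    refine le_trans (le_of_eq ?_) zero_le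
    rw [ENNReal.tsum_eq_zero]
    intro x
    by_cases hx : x = 0
    · simp [hx, nrm]
    · simp [chE, hx]
  | succ n ih =>
    rw [chE_tsum A m (fun x => (nrm x : ENNReal)) n]
    set M := ∑' h, m h * (nrm h : ENNReal) with hM
    have h1 : ∀ y, ∑' h, m h * (nrm (h + A.mulVec y) : ENNReal)
        ≤ M + (opBd A : ENNReal) * (nrm y : ENNReal) := by
      intro y
      calc _ ≤ ∑' h, (m h * (nrm h : ENNReal)
              + m h * ((opBd A : ENNReal) * (nrm y : ENNReal))) := by
            refine ENNReal.tsum_le_tsum fun h => ?_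
            rw [← mul_add]
            gcongr
            exact_mod_cast (nrm_add _ _).trans (Nat.add_le_add_left (nrm_mulVec A y) _)
        _ = _ := by
            rw [ENNReal.tsum_add, ENNReal.tsum_mul_right, hm, one_mul]
    calc _ ≤ ∑' y, chE A m n y * (M + (opBd A : ENNReal) * (nrm y : ENNReal)) :=
          ENNReal.tsum_le_tsum fun y => by gcongr; exact h1 y
      _ = ∑' y, (chE A m n y * M + (opBd A : ENNReal) * (chE A m n y * (nrm y : ENNReal))) :=
          tsum_congr fun y => by ring
      _ = M + (opBd A : ENNReal) * ∑' y, chE A m n y * (nrm y : ENNReal) := by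
          rw [ENNReal.tsum_add, ENNReal.tsum_mul_right, ENNReal.tsum_mul_left,
            chE_total A m hm, one_mul]
      _ ≤ M * ((opBd A + 2 : ℕ) : ENNReal) ^ n
            + (opBd A : ENNReal) * (M * ((opBd A + 2 : ℕ) : ENNReal) ^ n) := by
          gcongr
          calc M = M * 1 := (mul_one M).symm
            _ ≤ _ := by
              gcongr
              apply one_le_pow₀
              exact_mod_cast (by omega : 1 ≤ opBd A + 2)
      _ = (M * ((opBd A + 2 : ℕ) : ENNReal) ^ n) * ((opBd A + 1 : ℕ) : ENNReal) := by
          push_cast; ring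
      _ ≤ (M * ((opBd A + 2 : ℕ) : ENNReal) ^ n) * ((opBd A + 2 : ℕ) : ENNReal) := by
          gcongr; omega
      _ = _ := by ring

lemma chainDist_eq {k : ℕ} (A : Matrix (Fin k) (Fin k) ℤ) (μ : (Fin k → ℤ) → ℝ)
    (hμ0 : ∀ x, 0 ≤ μ x) (hm : ∑' h, ENNReal.ofReal (μ h) = 1) (n : ℕ) (x : Fin k → ℤ) :
    chainDist A μ n x = (chE A (fun h => ENNReal.ofReal (μ h)) n x).toReal := by
  induction n generalizing x with
  | zero => by_cases hx : x = 0 <;> simp [chainDist, chE, hx]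
  | succ n ih =>
    simp only [chainDist, chE]
    have hfin : ∀ y, chE A (fun h => ENNReal.ofReal (μ h)) n y ≠ ⊤ := fun y =>
      ENNReal.ne_top_of_tsum_ne_top (by rw [chE_total A _ hm]; simp) y
    rw [ENNReal.tsum_toReal_eq (fun y => ENNReal.mul_ne_top (hfin y) ENNReal.ofReal_ne_top)]
    refine tsum_congr fun y => ?_
    rw [ENNReal.toReal_mul, ENNReal.toReal_ofReal (hμ0 _), ih]

/-- Main facts on the unreduced chain. -/
lemma chain_facts {k : ℕ} (A : Matrix (Fin k) (Fin k) ℤ)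
    (μ : (Fin k → ℤ) → ℝ) (hμ0 : ∀ x, 0 ≤ μ x) (hμ1 : HasSum μ 1)
    (hL2 : Summable (fun h : Fin k → ℤ =>
      μ h * ((Finset.univ.sup fun i => (h i).natAbs : ℕ) : ℝ) ^ 2)) :
    ∃ M : ℝ, 0 ≤ M ∧ ∀ n, (∀ x, 0 ≤ chainDist A μ n x) ∧ HasSum (chainDist A μ n) 1 ∧
      Summable (fun x => chainDist A μ n x * (nrm x : ℝ)) ∧
      ∑' x, chainDist A μ n x * (nrm x : ℝ) ≤ M * ((opBd A + 2 : ℕ) : ℝ) ^ n := by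
  have hm : ∑' h, ENNReal.ofReal (μ h) = 1 := by
    rw [← ENNReal.ofReal_tsum_of_nonneg hμ0 hμ1.summable, hμ1.tsum_eq, ENNReal.ofReal_one]
  set m : (Fin k → ℤ) → ENNReal := fun h => ENNReal.ofReal (μ h) with hmdef
  have hsum : Summable (fun h : Fin k → ℤ => μ h * (nrm h : ℝ)) := by
    refine Summable.of_nonneg_of_le (fun h => mul_nonneg (hμ0 h) (Nat.cast_nonneg _)) (fun h => ?_)
      (hL2.mul_left (k : ℝ))
    rw [mul_left_comm]
    refine mul_le_mul_of_nonneg_left ?_ (hμ0 h)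
    have : nrm h ≤ k * (Finset.univ.sup fun i => (h i).natAbs) ^ 2 := by
      calc nrm h ≤ ∑ _i : Fin k, (Finset.univ.sup fun i => (h i).natAbs) ^ 2 := by
            refine Finset.sum_le_sum fun i _ => ?_
            exact (Finset.le_sup (f := fun i => (h i).natAbs) (Finset.mem_univ i)).trans
              (Nat.le_self_pow two_ne_zero _)
        _ = _ := by simp
    exact_mod_cast this
  have hMfin : ∑' h, m h * (nrm h : ENNReal) ≠ ⊤ := by
    have : ∀ h, m h * (nrm h : ENNReal) = ENNReal.ofReal (μ h * (nrm h : ℝ)) := fun h => by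
      rw [ENNReal.ofReal_mul (hμ0 h), ENNReal.ofReal_natCast]
    simp_rw [this]
    exact hsum.tsum_ofReal_ne_top
  refine ⟨(∑' h, m h * (nrm h : ENNReal)).toReal, ENNReal.toReal_nonneg, fun n => ?_⟩
  have hE : chainDist A μ n = fun x => (chE A m n x).toReal :=
    funext fun x => chainDist_eq A μ hμ0 hm n x
  have htot := chE_total A m hm n
  have hfin : ∀ y, chE A m n y ≠ ⊤ := fun y =>
      ENNReal.ne_top_of_tsum_ne_top (by rw [htot]; simp) y
  have hmom := chE_moment A m hm n
  have hRfin : (∑' h, m h * (nrm h : ENNReal)) * ((opBd A + 2 : ℕ) : ENNReal) ^ n ≠ ⊤ :=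
    ENNReal.mul_ne_top hMfin (ENNReal.pow_ne_top (ENNReal.natCast_ne_top _))
  have hmomfin : ∑' x, chE A m n x * (nrm x : ENNReal) ≠ ⊤ := ne_top_of_le_ne_top hRfin hmom
  have hfun : (fun x => chainDist A μ n x * (nrm x : ℝ))
      = fun x => (chE A m n x * (nrm x : ENNReal)).toReal := by
    funext x
    rw [hE, ENNReal.toReal_mul, ENNReal.toReal_natCast]
  refine ⟨fun x => by rw [hE]; exact ENNReal.toReal_nonneg, ?_, ?_, ?_⟩
  · have hs := ENNReal.summable_toReal (f := chE A m n) (by rw [htot]; simp)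
    have := hs.hasSum
    rw [← ENNReal.tsum_toReal_eq hfin, htot, ENNReal.toReal_one] at this
    rw [hE]; exact this
  · rw [hfun]; exact ENNReal.summable_toReal hmomfin
  · rw [hfun, ← ENNReal.tsum_toReal_eq
      (fun x => ENNReal.mul_ne_top (hfin x) (ENNReal.natCast_ne_top _))]
    refine (ENNReal.toReal_mono hRfin hmom).trans (le_of_eq ?_)
    rw [ENNReal.toReal_mul, ENNReal.toReal_pow, ENNReal.toReal_natCast]

/-- Lower bound for the variation distance through a box of side `2R+1`. -/
lemma tv_lower {k : ℕ} (A : Matrix (Fin k) (Fin k) ℤ) (μ : (Fin k → ℤ) → ℝ) (p n R : ℕ)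
    (hp : 0 < p) (h0 : ∀ x, 0 ≤ chainDist A μ n x) (h1 : HasSum (chainDist A μ n) 1)
    (hs : Summable (fun x => chainDist A μ n x * (nrm x : ℝ))) :
    (1 / 2) * (1 - (∑' x, chainDist A μ n x * (nrm x : ℝ)) / ((R : ℝ) + 1)
      - ((2 * R + 1 : ℝ) / p) ^ k) ≤ tvDist A μ p n := by
  classical
  have : NeZero p := ⟨hp.ne'⟩
  set D := chainDist A μ n with hD
  set T : Finset (Fin k → ℤ) := Fintype.piFinset fun _ => Finset.Icc (-(R : ℤ)) R with hT
  set cst : (Fin k → ℤ) → (Fin k → ZMod p) := fun y i => (y i : ZMod p) with hcst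
  set S := T.image cst with hS
  unfold tvDist
  refine mul_le_mul_of_nonneg_left ?_ (by norm_num)
  rw [tsum_fintype (L := .unconditional _) (fun x : Fin k → ZMod p => |chainDistMod A μ p n x - unif k p|)]
  have hT1 : 1 - (∑' x, D x * (nrm x : ℝ)) / ((R : ℝ) + 1) ≤ ∑ y ∈ T, D y := by
    have hind : HasSum (fun y => if y ∈ T then D y else 0) (∑ y ∈ T, D y) := by
      have := hasSum_sum_of_ne_finset_zero (f := fun y => if y ∈ T then D y else 0) (s := T)
        (L := .unconditional _) (fun y hy => by simp [hy])
      rwa [Finset.sum_congr rfl (fun y hy => if_pos hy)] at this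
    have hle := hasSum_le (fun y => ?_) h1 (hind.add (hs.hasSum.div_const ((R : ℝ) + 1)))
    · linarith
    · have hR : (0 : ℝ) < (R : ℝ) + 1 := by positivity
      by_cases hy : y ∈ T
      · simp only [hy, if_true]
        have : 0 ≤ D y * (nrm y : ℝ) / ((R : ℝ) + 1) :=
          div_nonneg (mul_nonneg (h0 y) (Nat.cast_nonneg _)) hR.le
        linarith
      · simp only [hy, if_false, zero_add]
        rw [le_div_iff₀ hR]
        refine mul_le_mul_of_nonneg_left ?_ (h0 y)
        have : R + 1 ≤ nrm y := by
          by_contra hlt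
          apply hy
          rw [hT, Fintype.mem_piFinset]
          intro i
          have : (y i).natAbs ≤ nrm y :=
            Finset.single_le_sum (f := fun i => (y i).natAbs) (fun _ _ => Nat.zero_le _)
              (Finset.mem_univ i)
          rw [Finset.mem_Icc]
          omega
        exact_mod_cast this
  have hfib : ∀ x, ∑ y ∈ T with cst y = x, D y ≤ chainDistMod A μ p n x := by
    intro x
    have hsub : Summable (fun y : {y : Fin k → ℤ // cst y = x} => D y.val) :=
      h1.summable.subtype {y | cst y = x}
    have := hsub.sum_le_tsum (T.subtype fun y => cst y = x) (fun y _ => h0 y.val)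
    rw [Finset.sum_subtype_eq_sum_filter] at this
    exact this
  have hcard : (S.card : ℝ) * unif k p ≤ ((2 * R + 1 : ℝ) / p) ^ k := by
    have h2 : S.card ≤ (2 * R + 1) ^ k := by
      refine Finset.card_image_le.trans (le_of_eq ?_)
      rw [hT, Fintype.card_piFinset]
      simp only [Int.card_Icc, Finset.prod_const, Finset.card_univ, Fintype.card_fin]
      congr 1
      omega
    rw [div_pow, div_eq_mul_inv, unif]
    refine mul_le_mul_of_nonneg_right ?_ (by positivity)
    exact_mod_cast h2
  calc _ ≤ ∑ y ∈ T, D y - (S.card : ℝ) * unif k p := by linarith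
    _ = ∑ x ∈ S, (∑ y ∈ T with cst y = x, D y - unif k p) := by
        rw [Finset.sum_sub_distrib, Finset.sum_const, nsmul_eq_mul,
          Finset.sum_fiberwise_of_maps_to (fun y hy => Finset.mem_image_of_mem cst hy)]
    _ ≤ ∑ x ∈ S, |chainDistMod A μ p n x - unif k p| :=
        Finset.sum_le_sum fun x _ =>
          (sub_le_sub_right (hfib x) _).trans (le_abs_self _)
    _ ≤ _ := Finset.sum_le_sum_of_subset_of_nonneg (Finset.subset_univ _)
        (fun _ _ _ => abs_nonneg _)


/-- **Theorem 3.10**: if `A` has a complex eigenvalue `λ` with `|λ| > 1`, the support of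
`μ` is not parallel to a proper subspace of `ℚ^k` invariant under `A`, and
`Σ_h μ(h) ‖h‖_∞² < ∞`, then there are `c > 0`, `N ∈ ℕ` and `η : ℕ → ℝ` with `η(p) → 1`,
such that for all `p > N` with `gcd(det A, p) = gcd(det B, p) = 1` and all `n ≤ c ln p`,
`‖P_n − U‖ ≥ (1/2) η(p)`.  (Hence `O(ln p)` steps are needed.) -/
theorem lower_bound_ln (k : ℕ) (hk : 1 ≤ k)
    (A : Matrix (Fin k) (Fin k) ℤ) (hA : A.det ≠ 0)
    (hEig : ∃ lam : ℂ, (A.map (Int.cast : ℤ → ℂ)).charpoly.IsRoot lam ∧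
      1 < ‖lam‖)
    (μ : (Fin k → ℤ) → ℝ) (hμ0 : ∀ x, 0 ≤ μ x) (hμ1 : HasSum μ 1)
    (hL2 : Summable (fun h : Fin k → ℤ =>
      μ h * ((Finset.univ.sup fun i => (h i).natAbs : ℕ) : ℝ) ^ 2))
    (hpar : ¬ ParallelInv A μ)
    (y : Fin k → (Fin k → ℤ)) (hy : ∀ j, y j ∈ VdSet A μ)
    (hybasis : (colMat y).det ≠ 0) :
    ∃ (c : ℝ) (N : ℕ) (η : ℕ → ℝ), 0 < c ∧ Filter.Tendsto η Filter.atTop (nhds 1) ∧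
      ∀ p : ℕ, N < p → Int.gcd A.det p = 1 → Int.gcd (colMat y).det p = 1 →
        ∀ n : ℕ, (n : ℝ) ≤ c * Real.log p →
          (1 / 2) * η p ≤ tvDist A μ p n := by
  obtain ⟨M, hM0, hM⟩ := chain_facts A μ hμ0 hμ1 hL2
  set L : ℝ := ((opBd A + 2 : ℕ) : ℝ) with hL
  have hL2' : 2 ≤ L := by
    rw [hL]; push_cast
    have : (0 : ℝ) ≤ (opBd A : ℝ) := Nat.cast_nonneg _
    linarith
  have hlog : 0 < Real.log L := Real.log_pos (by linarith)
  refine ⟨1 / (4 * Real.log L), 9,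
    fun p => 1 - M * (p : ℝ) ^ (-(1 / 4) : ℝ) - 3 * (p : ℝ) ^ (-(1 / 2) : ℝ),
    by positivity, ?_, ?_⟩
  · have h1 := (tendsto_rpow_neg_atTop (y := 1 / 4) (by norm_num)).comp
      (tendsto_natCast_atTop_atTop (R := ℝ))
    have h2 := (tendsto_rpow_neg_atTop (y := 1 / 2) (by norm_num)).comp
      (tendsto_natCast_atTop_atTop (R := ℝ))
    have := ((tendsto_const_nhds (x := (1 : ℝ))).sub (h1.const_mul M)).sub (h2.const_mul 3)
    simpa using this
  · intro p hp _ _ n hn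
    obtain ⟨h0, hs1, hs, hmom⟩ := hM n
    refine le_trans ?_ (tv_lower A μ p n (Nat.sqrt p) (by omega) h0 hs1 hs)
    refine mul_le_mul_of_nonneg_left ?_ (by norm_num)
    have hp9 : (9 : ℝ) < p := by exact_mod_cast hp
    have hp0 : (0 : ℝ) < p := by linarith
    have hsq : Real.sqrt p ≤ (Nat.sqrt p : ℝ) + 1 := Real.real_sqrt_le_nat_sqrt_succ
    have hsq' : (Nat.sqrt p : ℝ) ≤ Real.sqrt p := Real.nat_sqrt_le_real_sqrt
    have hs3 : 3 < Real.sqrt p := by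
      rw [Real.lt_sqrt (by norm_num)]; linarith
    have hss : Real.sqrt p * Real.sqrt p = p := Real.mul_self_sqrt hp0.le
    have hpow : L ^ n ≤ (p : ℝ) ^ (1 / 4 : ℝ) := by
      rw [← Real.rpow_natCast, Real.rpow_def_of_pos (by linarith), Real.rpow_def_of_pos hp0]
      apply Real.exp_le_exp.mpr
      calc Real.log L * n ≤ Real.log L * (1 / (4 * Real.log L) * Real.log p) := by gcongr
        _ = _ := by field_simp
    have hhalf : (p : ℝ) ^ (-(1 / 2) : ℝ) = 1 / Real.sqrt p := by
      rw [Real.rpow_neg hp0.le, Real.sqrt_eq_rpow, one_div ((p : ℝ) ^ (1 / 2 : ℝ))]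
    have hA1 : (∑' x, chainDist A μ n x * (nrm x : ℝ)) / ((Nat.sqrt p : ℝ) + 1)
        ≤ M * (p : ℝ) ^ (-(1 / 4) : ℝ) := by
      calc _ ≤ (M * (p : ℝ) ^ (1 / 4 : ℝ)) / Real.sqrt p := by
            apply div_le_div₀ (by positivity) _ (by linarith) hsq
            exact hmom.trans (mul_le_mul_of_nonneg_left hpow hM0)
        _ = M * ((p : ℝ) ^ (1 / 4 : ℝ) * (p : ℝ) ^ (-(1 / 2) : ℝ)) := by
            rw [hhalf]; ring
        _ = _ := by rw [← Real.rpow_add hp0]; norm_num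
    have hA2 : ((2 * (Nat.sqrt p : ℝ) + 1) / p) ^ k ≤ 3 * (p : ℝ) ^ (-(1 / 2) : ℝ) := by
      have hb : (2 * (Nat.sqrt p : ℝ) + 1) / p ≤ 3 / Real.sqrt p := by
        rw [div_le_div_iff₀ hp0 (by linarith)]
        nlinarith
      have hb1 : 3 / Real.sqrt p ≤ 1 := by
        rw [div_le_one (by linarith)]; exact hs3.le
      calc _ ≤ (2 * (Nat.sqrt p : ℝ) + 1) / p :=
            pow_le_of_le_one (by positivity) (hb.trans hb1) (by omega)
        _ ≤ _ := by rw [hhalf]; linarith [hb, show 3 * (1 / Real.sqrt p) = 3 / Real.sqrt p by ring]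
    linarith
end
end

section
/- Suppose A has a complex eigenvalue λ with λ^l = 1 for some positive integer l, the support of μ is not parallel to a proper subspace of ℚ^k invariant under A, and E[‖B_n‖_∞²] < ∞. Then there exist a constant γ > 0 and N ∈ ℕ such that for every integer p > N with gcd(det(A), p) = 1 and gcd(det(B), p) = 1, and every n ≥ 1, one has ‖P_n − U‖ ≥ (1/2)·exp(−γ·n/p²). Consequently, O(p²) steps are needed to reach the uniform distribution. -/
open scoped BigOperators
open Matrix

noncomputable section

namespace LB

/-- Fourier transform step, generic. -/
lemma step {k : ℕ} (A : Matrix (Fin k) (Fin k) ℤ) (c μ : (Fin k → ℤ) → ℝ)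
    (hc0 : ∀ x, 0 ≤ c x) (hc : Summable c) (hμ0 : ∀ x, 0 ≤ μ x) (hμ : Summable μ)
    (ψ : (Fin k → ℤ) → ℂ) (hψn : ∀ x, ‖ψ x‖ = 1) (hψ : ∀ x y, ψ (x + y) = ψ x * ψ y) :
    Summable (fun x => ∑' y : Fin k → ℤ, c y * μ (x - A.mulVec y)) ∧
    ∑' x, ((∑' y : Fin k → ℤ, c y * μ (x - A.mulVec y) : ℝ) : ℂ) * ψ x
      = (∑' y, (c y : ℂ) * ψ (A.mulVec y)) * ∑' h, (μ h : ℂ) * ψ h := by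
  let e : (Fin k → ℤ) × (Fin k → ℤ) ≃ (Fin k → ℤ) × (Fin k → ℤ) :=
    { toFun := fun q => (q.2, q.1 - A.mulVec q.2)
      invFun := fun q => (q.2 + A.mulVec q.1, q.1)
      left_inv := fun q => by simp
      right_inv := fun q => by simp }
  have hprod : Summable (fun q : (Fin k → ℤ) × (Fin k → ℤ) => c q.1 * μ q.2) :=
    hc.mul_of_nonneg hμ hc0 hμ0
  have hG : Summable (fun q : (Fin k → ℤ) × (Fin k → ℤ) => c q.2 * μ (q.1 - A.mulVec q.2)) :=
    (e.summable_iff).2 hprod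
  have hnc : Summable (fun y => ‖(c y : ℂ) * ψ (A.mulVec y)‖) := by
    refine hc.congr fun y => ?_
    simp [hψn, abs_of_nonneg (hc0 y)]
  have hnμ : Summable (fun y => ‖(μ y : ℂ) * ψ y‖) := by
    refine hμ.congr fun y => ?_
    simp [hψn, abs_of_nonneg (hμ0 y)]
  refine ⟨hG.prod, ?_⟩
  rw [tsum_mul_tsum_of_summable_norm hnc hnμ]
  rw [← e.tsum_eq]
  have hGC : Summable (fun q : (Fin k → ℤ) × (Fin k → ℤ) =>
      ((c q.2 * μ (q.1 - A.mulVec q.2) : ℝ) : ℂ) * ψ q.1) := by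
    apply Summable.of_norm
    refine hG.congr fun q => ?_
    rw [norm_mul, hψn, mul_one, Complex.norm_real, Real.norm_of_nonneg]
    exact mul_nonneg (hc0 _) (hμ0 _)
  have h1 : ∀ q : (Fin k → ℤ) × (Fin k → ℤ),
      ((c (e q).1 : ℂ) * ψ (A.mulVec (e q).1)) * ((μ (e q).2 : ℂ) * ψ (e q).2)
      = ((c q.2 * μ (q.1 - A.mulVec q.2) : ℝ) : ℂ) * ψ q.1 := by
    intro q
    have : ψ q.1 = ψ (A.mulVec q.2) * ψ (q.1 - A.mulVec q.2) := by
      rw [← hψ]; congr 1; abel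
    rw [this]
    simp only [e, Equiv.coe_fn_mk]
    push_cast
    ring
  simp_rw [h1]
  rw [hGC.tsum_prod]
  refine tsum_congr fun x => ?_
  rw [Complex.ofReal_tsum, ← tsum_mul_right]

lemma chain_props {k : ℕ} (A : Matrix (Fin k) (Fin k) ℤ) (μ : (Fin k → ℤ) → ℝ)
    (hμ0 : ∀ x, 0 ≤ μ x) (hμ : Summable μ) (n : ℕ) :
    (∀ x, 0 ≤ chainDist A μ n x) ∧ Summable (chainDist A μ n) := by
  induction n with
  | zero =>
    refine ⟨fun x => ?_, ?_⟩
    · simp only [chainDist]; split_ifs <;> norm_num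
    · exact (hasSum_ite_eq (0 : Fin k → ℤ) (1 : ℝ)).summable
  | succ n ih =>
    refine ⟨fun x => ?_, ?_⟩
    · simp only [chainDist]
      exact tsum_nonneg fun y => mul_nonneg (ih.1 _) (hμ0 _)
    · exact (step A _ μ ih.1 ih.2 hμ0 hμ (fun _ => 1) (by simp) (by simp)).1

/-- character on integer vectors -/
def psi {k : ℕ} (p : ℕ) [NeZero p] (a x : Fin k → ℤ) : ℂ :=
  ZMod.stdAddChar (((a ⬝ᵥ x : ℤ)) : ZMod p)

lemma psi_norm {k : ℕ} (p : ℕ) [NeZero p] (a x : Fin k → ℤ) : ‖psi p a x‖ = 1 :=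
  AddChar.norm_apply _ _

lemma psi_add {k : ℕ} (p : ℕ) [NeZero p] (a x y : Fin k → ℤ) :
    psi p a (x + y) = psi p a x * psi p a y := by
  unfold psi
  rw [dotProduct_add, Int.cast_add, AddChar.map_add_eq_mul]

lemma psi_mulVec {k : ℕ} (p : ℕ) [NeZero p] (A : Matrix (Fin k) (Fin k) ℤ) (a x : Fin k → ℤ) :
    psi p a (A.mulVec x) = psi p (a ᵥ* A) x := by
  unfold psi
  rw [dotProduct_mulVec]

lemma fourier_lb {k : ℕ} (A : Matrix (Fin k) (Fin k) ℤ) (μ : (Fin k → ℤ) → ℝ)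
    (hμ0 : ∀ x, 0 ≤ μ x) (hμ : Summable μ) (p : ℕ) [NeZero p] (S : Set (Fin k → ℤ))
    (hS : ∀ a ∈ S, a ᵥ* A ∈ S) (r : ℝ) (hr : 0 ≤ r)
    (hb : ∀ a ∈ S, r ≤ ‖∑' h, (μ h : ℂ) * psi p a h‖) (n : ℕ) :
    ∀ a ∈ S, r ^ n ≤ ‖∑' x, (chainDist A μ n x : ℂ) * psi p a x‖ := by
  induction n with
  | zero =>
    intro a _
    rw [tsum_eq_single 0]
    · simp [chainDist, psi_norm]
    · intro x hx
      simp [chainDist, hx]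
  | succ n ih =>
    intro a ha
    obtain ⟨h0, hs⟩ := chain_props A μ hμ0 hμ n
    have := (step A _ μ h0 hs hμ0 hμ (psi p a) (psi_norm p a) (psi_add p a)).2
    simp only [chainDist]
    rw [this, norm_mul, pow_succ]
    simp_rw [psi_mulVec]
    exact mul_le_mul (ih _ (hS a ha)) (hb a ha) hr (norm_nonneg _)

lemma tsum_fiber {X Y : Type*} [Fintype Y] (f : X → Y) (g : X → ℂ) (hg : Summable g) :
    ∑' x, g x = ∑ y, ∑' x : {x // f x = y}, g x.1 := by
  have hsig := (Equiv.sigmaFiberEquiv f).summable_iff.2 hg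
  have h1 := hsig.tsum_sigma
  exact ((Equiv.sigmaFiberEquiv f).tsum_eq g).symm.trans (h1.trans (tsum_fintype _))

lemma tv_lb {k : ℕ} (A : Matrix (Fin k) (Fin k) ℤ) (μ : (Fin k → ℤ) → ℝ)
    (hμ0 : ∀ x, 0 ≤ μ x) (hμ : Summable μ) (p : ℕ) [NeZero p] (a : Fin k → ℤ)
    (i : Fin k) (hi : ((a i : ℤ) : ZMod p) ≠ 0) (n : ℕ) :
    (1 / 2) * ‖∑' x, (chainDist A μ n x : ℂ) * psi p a x‖ ≤ tvDist A μ p n := by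
  unfold tvDist
  refine mul_le_mul_of_nonneg_left ?_ (by norm_num)
  obtain ⟨h0, hs⟩ := chain_props A μ hμ0 hμ n
  let χ : AddChar (Fin k → ZMod p) ℂ :=
    { toFun := fun x => ZMod.stdAddChar ((fun j => ((a j : ℤ) : ZMod p)) ⬝ᵥ x)
      map_zero_eq_one' := by simp
      map_add_eq_mul' := fun x y => by rw [dotProduct_add, AddChar.map_add_eq_mul] }
  have hχ : χ ≠ 0 := by
    intro h
    have h1 : χ (Pi.single i 1) = 1 := by rw [h]; rfl
    have h2 : χ (Pi.single i 1) = ZMod.stdAddChar ((a i : ℤ) : ZMod p) := by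
      change ZMod.stdAddChar _ = _
      simp
    rw [h2, ← AddChar.map_zero_eq_one (ZMod.stdAddChar (N := p))] at h1
    exact hi (ZMod.injective_stdAddChar h1)
  have hsum0 : ∑ x, χ x = 0 := AddChar.sum_eq_zero_of_ne_one hχ
  let f : (Fin k → ℤ) → (Fin k → ZMod p) := fun y => fun i => ((y i : ZMod p))
  have hpsi : ∀ y, psi p a y = χ (f y) := by
    intro y
    change ZMod.stdAddChar _ = ZMod.stdAddChar _
    congr 1
    simp [dotProduct, f]
  have hsC : Summable (fun x => (chainDist A μ n x : ℂ) * psi p a x) := by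
    apply Summable.of_norm
    refine hs.congr fun x => ?_
    simp [psi_norm, abs_of_nonneg (h0 x)]
  have key : ∑' x, (chainDist A μ n x : ℂ) * psi p a x
      = ∑ x, (chainDistMod A μ p n x : ℂ) * χ x := by
    rw [tsum_fiber f _ hsC]
    refine Finset.sum_congr rfl fun x _ => ?_
    unfold chainDistMod
    rw [Complex.ofReal_tsum, ← tsum_mul_right]
    refine tsum_congr fun y => ?_
    have : f y.1 = x := y.2
    rw [hpsi, this]
  have key2 : ∑ x, (chainDistMod A μ p n x : ℂ) * χ x
      = ∑ x, ((chainDistMod A μ p n x - unif k p : ℝ) : ℂ) * χ x := by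
    simp_rw [Complex.ofReal_sub, sub_mul, Finset.sum_sub_distrib, ← Finset.mul_sum]
    rw [hsum0]; simp
  rw [key, key2, tsum_fintype]
  refine (norm_sum_le _ _).trans (Finset.sum_le_sum fun x _ => ?_)
  rw [norm_mul, AddChar.norm_apply, mul_one, Complex.norm_real, Real.norm_eq_abs]

lemma mu_lb {k : ℕ} (μ : (Fin k → ℤ) → ℝ) (hμ0 : ∀ x, 0 ≤ μ x) (hμ1 : HasSum μ 1)
    (hL2 : Summable (fun h : Fin k → ℤ =>
      μ h * ((Finset.univ.sup fun i => (h i).natAbs : ℕ) : ℝ) ^ 2))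
    (M : ℝ) (a : Fin k → ℤ) (ha : ∀ i, |(a i : ℝ)| ≤ M) (p : ℕ) [NeZero p] :
    1 - (2 * Real.pi ^ 2 * (k * M) ^ 2 * ∑' h : Fin k → ℤ,
      μ h * ((Finset.univ.sup fun i => (h i).natAbs : ℕ) : ℝ) ^ 2) / (p : ℝ) ^ 2
      ≤ ‖∑' h, (μ h : ℂ) * psi p a h‖ := by
  have hp : (0 : ℝ) < p := by exact_mod_cast Nat.pos_of_ne_zero (NeZero.ne p)
  have hsC : Summable (fun x => (μ x : ℂ) * psi p a x) := by
    apply Summable.of_norm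
    refine hμ1.summable.congr fun x => ?_
    simp [psi_norm, abs_of_nonneg (hμ0 x)]
  refine le_trans ?_ (Complex.re_le_norm _)
  rw [Complex.re_tsum hsC]
  have hre : Summable (fun h => ((μ h : ℂ) * psi p a h).re) := (Complex.hasSum_re hsC.hasSum).summable
  set K : ℝ := 2 * Real.pi ^ 2 * (k * M) ^ 2 / (p : ℝ) ^ 2 with hK
  have hL := (hμ1.sub (hL2.hasSum.mul_left K))
  have e : 1 - (2 * Real.pi ^ 2 * (k * M) ^ 2 * ∑' h : Fin k → ℤ,
      μ h * ((Finset.univ.sup fun i => (h i).natAbs : ℕ) : ℝ) ^ 2) / (p : ℝ) ^ 2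
      = 1 - K * ∑' h : Fin k → ℤ,
      μ h * ((Finset.univ.sup fun i => (h i).natAbs : ℕ) : ℝ) ^ 2 := by
    rw [hK]; ring
  rw [e]
  refine hasSum_le (fun h => ?_) hL hre.hasSum
  set s : ℝ := ((Finset.univ.sup fun i => (h i).natAbs : ℕ) : ℝ) with hs
  have hsi : ∀ i, |(h i : ℝ)| ≤ s := by
    intro i
    have : (h i).natAbs ≤ Finset.univ.sup fun i => (h i).natAbs :=
      Finset.le_sup (f := fun i => (h i).natAbs) (Finset.mem_univ i)
    rw [← Int.cast_abs, ← Nat.cast_natAbs, hs]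
    exact_mod_cast this
  have hdot : |((a ⬝ᵥ h : ℤ) : ℝ)| ≤ k * M * s := by
    simp only [dotProduct, Int.cast_sum, Int.cast_mul]
    refine (Finset.abs_sum_le_sum_abs _ _).trans ?_
    refine (Finset.sum_le_card_nsmul _ _ (M * s) fun i _ => ?_).trans ?_
    · rw [abs_mul]
      exact mul_le_mul (ha i) (hsi i) (abs_nonneg _) ((abs_nonneg _).trans (ha i))
    · simp [mul_assoc]
  have hpsi : (psi p a h).re = Real.cos (2 * Real.pi * ((a ⬝ᵥ h : ℤ) : ℝ) / p) := by
    unfold psi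
    rw [ZMod.stdAddChar_coe, ← Complex.exp_ofReal_mul_I_re]
    congr 2
    push_cast
    ring
  rw [Complex.re_ofReal_mul, hpsi]
  have hcos := Real.one_sub_sq_div_two_le_cos (x := 2 * Real.pi * ((a ⬝ᵥ h : ℤ) : ℝ) / p)
  have hsq : ((a ⬝ᵥ h : ℤ) : ℝ) ^ 2 ≤ (k * M * s) ^ 2 := by
    rw [← sq_abs]; exact pow_le_pow_left₀ (abs_nonneg _) hdot 2
  have : 1 - K * s ^ 2 ≤ Real.cos (2 * Real.pi * ((a ⬝ᵥ h : ℤ) : ℝ) / p) := by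
    refine le_trans ?_ hcos
    have h3 : (2 * Real.pi * ((a ⬝ᵥ h : ℤ) : ℝ) / p) ^ 2 / 2
        = 2 * Real.pi ^ 2 / (p : ℝ) ^ 2 * ((a ⬝ᵥ h : ℤ) : ℝ) ^ 2 := by
      field_simp
    have h4 : K * s ^ 2 = 2 * Real.pi ^ 2 / (p : ℝ) ^ 2 * (k * M * s) ^ 2 := by
      rw [hK]; ring
    rw [h3, h4]
    have := mul_le_mul_of_nonneg_left hsq (by positivity : 0 ≤ 2 * Real.pi ^ 2 / (p : ℝ) ^ 2)
    linarith
  have := mul_le_mul_of_nonneg_left this (hμ0 h)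
  linarith

lemma exists_vec {k : ℕ} (A : Matrix (Fin k) (Fin k) ℤ)
    (lam : ℂ) (l : ℕ) (hroot : (A.map (Int.cast : ℤ → ℂ)).charpoly.IsRoot lam)
    (hl : lam ^ l = 1) : ∃ v : Fin k → ℤ, v ≠ 0 ∧ v ᵥ* (A ^ l) = v := by
  have hdet : (A ^ l - 1).det = 0 := by
    set C := A.map (Int.cast : ℤ → ℂ) with hC
    have h1 : (Matrix.scalar (Fin k) lam - C).det = 0 := by
      rw [← Matrix.eval_charpoly]; exact hroot
    have hcomm : Commute (Matrix.scalar (Fin k) lam) C :=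
      Matrix.scalar_commute lam (fun r => Commute.all _ _) C
    have h2 := hcomm.mul_geom_sum₂ l
    rw [← map_pow, hl, map_one] at h2
    have h3 : (1 - C ^ l).det = 0 := by
      rw [← h2, Matrix.det_mul, h1, zero_mul]
    have h4 : (C ^ l - 1).det = 0 := by
      rw [← neg_sub, Matrix.det_neg, h3, mul_zero]
    have h5 : C ^ l - 1 = (Int.castRingHom ℂ).mapMatrix (A ^ l - 1) := by
      rw [map_sub, map_pow, map_one]; rfl
    rw [h5, ← RingHom.map_det] at h4
    exact Int.cast_eq_zero.1 h4
  obtain ⟨v, hv, h⟩ := Matrix.exists_vecMul_eq_zero_iff.2 hdet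
  refine ⟨v, hv, ?_⟩
  rw [Matrix.vecMul_sub, Matrix.vecMul_one] at h
  exact sub_eq_zero.1 h

end LB

/-- **Theorem 3.11**: if `A` has a complex eigenvalue `λ` with `λ^l = 1` for some positive
integer `l`, the support of `μ` is not parallel to a proper subspace of `ℚ^k` invariant
under `A`, and `Σ_h μ(h) ‖h‖_∞² < ∞`, then there are `γ > 0` and `N ∈ ℕ` such that for
all `p > N` with `gcd(det A, p) = gcd(det B, p) = 1` and all `n ≥ 1`,
`‖P_n − U‖ ≥ (1/2) exp(−γ n / p²)`.  (Hence `O(p²)` steps are needed.) -/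
theorem lower_bound_p_sq (k : ℕ) (hk : 1 ≤ k)
    (A : Matrix (Fin k) (Fin k) ℤ) (hA : A.det ≠ 0)
    (hEig : ∃ (lam : ℂ) (l : ℕ), 0 < l ∧
      (A.map (Int.cast : ℤ → ℂ)).charpoly.IsRoot lam ∧ lam ^ l = 1)
    (μ : (Fin k → ℤ) → ℝ) (hμ0 : ∀ x, 0 ≤ μ x) (hμ1 : HasSum μ 1)
    (hL2 : Summable (fun h : Fin k → ℤ =>
      μ h * ((Finset.univ.sup fun i => (h i).natAbs : ℕ) : ℝ) ^ 2))
    (hpar : ¬ ParallelInv A μ)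
    (y : Fin k → (Fin k → ℤ)) (hy : ∀ j, y j ∈ VdSet A μ)
    (hybasis : (colMat y).det ≠ 0) :
    ∃ (γ : ℝ) (N : ℕ), 0 < γ ∧
      ∀ p : ℕ, N < p → Int.gcd A.det p = 1 → Int.gcd (colMat y).det p = 1 →
        ∀ n : ℕ, 1 ≤ n →
          (1 / 2) * Real.exp (-(γ * n) / (p : ℝ) ^ 2) ≤ tvDist A μ p n := by
  obtain ⟨lam, l, hl0, hroot, hl⟩ := hEig
  obtain ⟨v, hv, hvA⟩ := LB.exists_vec A lam l hroot hl
  obtain ⟨i0, hi0⟩ : ∃ i, v i ≠ 0 := by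
    by_contra! h
    exact hv (funext h)
  have hper : ∀ j, v ᵥ* A ^ j = v ᵥ* A ^ (j % l) := by
    have hq : ∀ q, v ᵥ* (A ^ l) ^ q = v := by
      intro q
      induction q with
      | zero => simp
      | succ q ih => rw [pow_succ, ← Matrix.vecMul_vecMul, ih, hvA]
    intro j
    conv_lhs => rw [← Nat.div_add_mod j l, pow_add, pow_mul, ← Matrix.vecMul_vecMul, hq]
  let M : ℕ := ∑ j ∈ Finset.range l, ∑ i, ((v ᵥ* A ^ j) i).natAbs
  have hM : ∀ j i, ((v ᵥ* A ^ j) i).natAbs ≤ M := by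
    intro j i
    rw [hper j]
    refine le_trans (Finset.single_le_sum (f := fun i => ((v ᵥ* A ^ (j % l)) i).natAbs)
      (fun _ _ => Nat.zero_le _) (Finset.mem_univ i)) ?_
    exact Finset.single_le_sum (f := fun j => ∑ i, ((v ᵥ* A ^ j) i).natAbs)
      (fun _ _ => Nat.zero_le _) (Finset.mem_range.2 (Nat.mod_lt j hl0))
  set D : ℝ := 2 * Real.pi ^ 2 * (k * (M : ℝ)) ^ 2 * ∑' h : Fin k → ℤ,
      μ h * ((Finset.univ.sup fun i => (h i).natAbs : ℕ) : ℝ) ^ 2 with hD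
  have hD0 : 0 ≤ D := by
    have : 0 ≤ ∑' h : Fin k → ℤ,
      μ h * ((Finset.univ.sup fun i => (h i).natAbs : ℕ) : ℝ) ^ 2 :=
      tsum_nonneg fun h => mul_nonneg (hμ0 h) (by positivity)
    positivity
  refine ⟨2 * D + 1, M + ⌈2 * D⌉₊, by positivity, ?_⟩
  intro p hp _ _ n _
  have hp0 : p ≠ 0 := by omega
  haveI : NeZero p := ⟨hp0⟩
  have hpR : (1 : ℝ) ≤ p := by exact_mod_cast Nat.one_le_iff_ne_zero.2 hp0
  have h2D : 2 * D ≤ p := by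
    refine (Nat.le_ceil _).trans ?_
    exact_mod_cast (by omega : ⌈2 * D⌉₊ ≤ p)
  have hvi : ((v i0 : ℤ) : ZMod p) ≠ 0 := by
    intro h
    rw [ZMod.intCast_zmod_eq_zero_iff_dvd] at h
    have h1 := Int.natAbs_dvd_natAbs.2 h
    have h2 := Nat.le_of_dvd (Int.natAbs_pos.2 hi0) h1
    have h3 := hM 0 i0
    simp only [pow_zero, Matrix.vecMul_one] at h3
    simp only [Int.natAbs_natCast] at h2
    omega
  set x : ℝ := D / (p : ℝ) ^ 2 with hx
  have hx0 : 0 ≤ x := by positivity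
  have hx1 : x ≤ 1 / 2 := by
    rw [hx, div_le_iff₀ (by positivity)]
    nlinarith
  have hexp : Real.exp (-(2 * x)) ≤ 1 - x := by
    rw [Real.exp_neg]
    have h1 : 1 + 2 * x ≤ Real.exp (2 * x) := by linarith [Real.add_one_le_exp (2 * x)]
    refine (inv_anti₀ (by positivity) h1).trans ?_
    rw [inv_le_iff_one_le_mul₀ (by positivity)]
    nlinarith
  have hF := LB.fourier_lb A μ hμ0 hμ1.summable p (Set.range fun j => v ᵥ* A ^ j)
    (by
      rintro _ ⟨j, rfl⟩
      exact ⟨j + 1, by simp only [pow_succ, Matrix.vecMul_vecMul]⟩) (1 - x) (by linarith)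
    (by
      rintro _ ⟨j, rfl⟩
      refine LB.mu_lb μ hμ0 hμ1 hL2 M _ (fun i => ?_) p
      rw [← Int.cast_abs, ← Nat.cast_natAbs]
      exact_mod_cast hM j i) n v ⟨0, by simp⟩
  refine le_trans ?_ (LB.tv_lb A μ hμ0 hμ1.summable p v i0 hvi n)
  refine mul_le_mul_of_nonneg_left (le_trans ?_ hF) (by norm_num)
  refine le_trans ?_ (pow_le_pow_left₀ (Real.exp_pos _).le hexp n)
  rw [← Real.exp_nat_mul]
  apply Real.exp_le_exp.2
  have : (n : ℝ) * -(2 * x) = -(2 * D * n) / (p : ℝ) ^ 2 := by rw [hx]; ring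
  rw [this]
  gcongr
  linarith
end
end
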